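/- Let θ be a proper convex piecewise linear function on ℝ^m, let Φ : ℝ^n × ℝ^d → ℝ^m and φ₀ : ℝ^n × ℝ^d → ℝ be C²-smooth around (x̄,w̄) with z̄ := Φ(x̄,w̄) ∈ dom θ, let v̄ ∈ ∇_xφ₀(x̄,w̄) + ∇_xΦ(x̄,w̄)*∂θ(z̄), and assume the nondegeneracy condition S(z̄) ∩ ker ∇_xΦ(x̄,w̄)* = {0}, so that there is a unique λ̄ ∈ ∂θ(z̄) with v̄ = ∇_xφ₀(x̄,w̄) + ∇_xΦ(x̄,w̄)*λ̄. Then x̄ is a fully stable locally optimal solution of the problem P(w̄,v̄): minimize φ₀(x,w̄) + θ(Φ(x,w̄)) − ⟨v̄,x⟩, if and only if the composite strong second-order sufficient condition holds: ⟨u, ∇²_{xx}L(x̄,w̄,λ̄)u⟩ > 0 for every u ≠ 0 with ∇_xΦ(x̄,w̄)u ∈ dom ∂²θ(z̄,λ̄), where L(x,w,λ) := φ₀(x,w) + ⟨λ, Φ(x,w)⟩. -/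

import Mathlib

noncomputable section
open Set Filter Topology Metric
open scoped RealInnerProductSpace Pointwise NNReal Classical

/-- `Euc m` is the Euclidean space `ℝ^m`. -/
abbrev Euc (m : ℕ) := EuclideanSpace ℝ (Fin m)

variable {F G : Type*} [NormedAddCommGroup F] [InnerProductSpace ℝ F]
  [NormedAddCommGroup G] [InnerProductSpace ℝ G]

/-- The (convex) subdifferential of an extended-real-valued function:
`∂θ(z) = {v : θ(z') ≥ θ(z) + ⟨v, z' - z⟩ for all z'}`. -/
def subdiff (θ : F → EReal) (z : F) : Set F :=
  {v | ∀ z', θ z + ((⟪v, z' - z⟫ : ℝ) : EReal) ≤ θ z'}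

/-- The Fréchet (regular) normal cone to `Ω` at `x`:
vectors `v` with `limsup_{y → x, y ∈ Ω} ⟨v, y - x⟩ / ‖y - x‖ ≤ 0`. -/
def frechetNormal (Ω : Set F) (x : F) : Set F :=
  {v | Filter.limsup (fun y => ⟪v, y - x⟫ / ‖y - x‖) (𝓝[Ω] x) ≤ 0}

/-- The limiting (Mordukhovich) normal cone to `Ω` at `x`. -/
def limitingNormal (Ω : Set F) (x : F) : Set F :=
  {v | ∃ xs vs : ℕ → F, (∀ k, xs k ∈ Ω) ∧ Filter.Tendsto xs Filter.atTop (𝓝 x) ∧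
    Filter.Tendsto vs Filter.atTop (𝓝 v) ∧ ∀ k, vs k ∈ frechetNormal Ω (xs k)}

/-- Pairing into the `ℓ²`-product of two inner product spaces. -/
def pl2 (x : F) (y : G) : WithLp 2 (F × G) := (WithLp.equiv 2 (F × G)).symm (x, y)

/-- The second-order subdifferential (generalized Hessian)
`∂²θ(z,v)(u) = {w : (w,-u) ∈ N((z,v); gph ∂θ)}`. -/
def sosd (θ : F → EReal) (z v : F) (u : F) : Set F :=
  {w | pl2 w (-u) ∈ limitingNormal
    {q : WithLp 2 (F × F) | ((WithLp.equiv 2 (F × F)) q).2 ∈ subdiff θ ((WithLp.equiv 2 (F × F)) q).1}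
    (pl2 z v)}

/-- The polyhedral domain `{z : ⟨d i, z⟩ ≤ β i for all i}` of a CPWL function. -/
def cpwlDom {m p : ℕ} (d : Fin p → Euc m) (β : Fin p → ℝ) : Set (Euc m) :=
  {z | ∀ i, ⟪d i, z⟫ ≤ β i}

/-- The CPWL function determined by the data `(a, α, d, β)`:
`θ(z) = max_i (⟨a i, z⟩ - α i)` on its polyhedral domain and `+∞` outside. -/
def cpwlFun {m l p : ℕ} (a : Fin l → Euc m) (α : Fin l → ℝ) (d : Fin p → Euc m)
    (β : Fin p → ℝ) : Euc m → EReal :=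
  fun z => if z ∈ cpwlDom d β then (((⨆ i, (⟪a i, z⟫ - α i)) : ℝ) : EReal) else ⊤

/-- Active indices of the max expression at `z`. -/
def Kact {m l p : ℕ} (a : Fin l → Euc m) (α : Fin l → ℝ) (d : Fin p → Euc m) (β : Fin p → ℝ)
    (z : Euc m) : Set (Fin l) :=
  {i | cpwlFun a α d β z = ((⟪a i, z⟫ - α i : ℝ) : EReal)}

/-- Active indices of the domain inequalities at `z`. -/
def Iact {m p : ℕ} (d : Fin p → Euc m) (β : Fin p → ℝ) (z : Euc m) : Set (Fin p) :=
  {i | ⟪d i, z⟫ = β i}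

/-- Convex conic hull: all finite nonnegative combinations of elements of `s`. -/
def coneHull (s : Set F) : Set F :=
  {x | ∃ (n : ℕ) (c : Fin n → ℝ) (y : Fin n → F), (∀ i, 0 ≤ c i) ∧ (∀ i, y i ∈ s) ∧
    x = ∑ i, c i • y i}

/-- `Spar θ z` is the linear subspace parallel to the affine hull of `∂θ(z)`. -/
def Spar (θ : F → EReal) (z : F) : Submodule ℝ F := (affineSpan ℝ (subdiff θ z)).direction

/-- A convex polyhedron: a finite intersection of closed halfspaces. -/
def IsPolyhedron {V : Type*} [AddCommGroup V] [Module ℝ V] (C : Set V) : Prop :=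
  ∃ (N : ℕ) (f : Fin N → V →ₗ[ℝ] ℝ) (b : Fin N → ℝ), C = {x | ∀ i, f i x ≤ b i}

/-- A proper convex piecewise linear function with values in `ℝ ∪ {+∞}`:
its epigraph is a convex polyhedron, it never takes the value `-∞`, and it is
not identically `+∞`. -/
def IsCPWL {V : Type*} [AddCommGroup V] [Module ℝ V] (f : V → EReal) : Prop :=
  IsPolyhedron {xt : V × ℝ | f xt.1 ≤ (xt.2 : EReal)} ∧ (∀ x, f x ≠ ⊥) ∧ (∃ x, f x ≠ ⊤)

/-- Local argmin set `M_γ(w,v)` of `x ↦ φ(x,w) - ⟨v,x⟩` over the ball `‖x - xb‖ ≤ γ`,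
with the convention that minimizers at which the objective is `+∞` are discarded. -/
def argminLoc {n d : ℕ} (φ : Euc n → Euc d → EReal) (xb : Euc n) (γ : ℝ) (w : Euc d)
    (v : Euc n) : Set (Euc n) :=
  {x | ‖x - xb‖ ≤ γ ∧ φ x w ≠ ⊤ ∧
    ∀ y, ‖y - xb‖ ≤ γ → φ x w - ((⟪v, x⟫ : ℝ) : EReal) ≤ φ y w - ((⟪v, y⟫ : ℝ) : EReal)}

/-- Local optimal value `m_γ(w,v)` of `x ↦ φ(x,w) - ⟨v,x⟩` over the ball `‖x - xb‖ ≤ γ`. -/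
def infLoc {n d : ℕ} (φ : Euc n → Euc d → EReal) (xb : Euc n) (γ : ℝ) (w : Euc d)
    (v : Euc n) : EReal :=
  ⨅ x ∈ {x : Euc n | ‖x - xb‖ ≤ γ}, (φ x w - ((⟪v, x⟫ : ℝ) : EReal))

/-- `xb` is a fully stable locally optimal solution of
`minimize φ(x,wb) - ⟨vb,x⟩` : for some `γ > 0` and neighborhoods `W × V` of `(wb,vb)`,
the local argmin map is single-valued and Lipschitz with value `xb` at `(wb,vb)`, and the
local optimal value function is finite and Lipschitz. -/
def FullyStableSol {n d : ℕ} (φ : Euc n → Euc d → EReal) (xb : Euc n) (wb : Euc d)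
    (vb : Euc n) : Prop :=
  ∃ γ > (0 : ℝ), ∃ W ∈ 𝓝 wb, ∃ V ∈ 𝓝 vb,
    (∃ σ : Euc d × Euc n → Euc n,
      (∃ K : ℝ≥0, LipschitzOnWith K σ (W ×ˢ V)) ∧
      (∀ w ∈ W, ∀ v ∈ V, argminLoc φ xb γ w v = {σ (w, v)}) ∧ σ (wb, vb) = xb) ∧
    (∃ μ : Euc d × Euc n → ℝ,
      (∃ K : ℝ≥0, LipschitzOnWith K μ (W ×ˢ V)) ∧
      ∀ w ∈ W, ∀ v ∈ V, infLoc φ xb γ w v = ((μ (w, v) : ℝ) : EReal))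

/-- The partial limiting subdifferential `∂ₓψ(x,w)` defined through the limiting normal
cone to the epigraph of `ψ(·,w)`. -/
def partialSubdiffX {n d : ℕ} (ψ : Euc n → Euc d → EReal) (x : Euc n) (w : Euc d) :
    Set (Euc n) :=
  {v | ∃ r : ℝ, ψ x w = (r : EReal) ∧
    pl2 v (-1 : ℝ) ∈ limitingNormal
      {q : WithLp 2 (Euc n × ℝ) |
        ψ ((WithLp.equiv 2 (Euc n × ℝ)) q).1 w ≤ ((((WithLp.equiv 2 (Euc n × ℝ)) q).2 : ℝ) : EReal)}
      (pl2 x r)}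

/-- The coderivative `D*∂ₓψ(xb,wb,qb)(u)` of the partial subdifferential mapping,
via the limiting normal cone to its graph in `ℝ^n × ℝ^d × ℝ^n`. -/
def coderivPartialSubdiffX {n d : ℕ} (ψ : Euc n → Euc d → EReal) (xb : Euc n) (wb : Euc d)
    (qb : Euc n) (u : Euc n) : Set (Euc n × Euc d) :=
  {P | pl2 (pl2 P.1 P.2) (-u) ∈ limitingNormal
    {t : WithLp 2 (WithLp 2 (Euc n × Euc d) × Euc n) |
      ((WithLp.equiv 2 (WithLp 2 (Euc n × Euc d) × Euc n)) t).2 ∈ partialSubdiffX ψ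
        ((WithLp.equiv 2 (Euc n × Euc d)) (((WithLp.equiv 2 (WithLp 2 (Euc n × Euc d) × Euc n)) t).1)).1
        ((WithLp.equiv 2 (Euc n × Euc d)) (((WithLp.equiv 2 (WithLp 2 (Euc n × Euc d) × Euc n)) t).1)).2}
    (pl2 (pl2 xb wb) qb)}

/-- Partial Hessian in `x` : the derivative in `x` of the partial gradient in `x`. -/
def hessXX {n d : ℕ} (g : Euc n → Euc d → ℝ) (xb : Euc n) (wb : Euc d) : Euc n →L[ℝ] Euc n :=
  fderiv ℝ (fun x => gradient (fun x' => g x' wb) x) xb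

/-- Mixed partial Hessian: derivative in `w` of the partial gradient in `x`. -/
def hessWX {n d : ℕ} (g : Euc n → Euc d → ℝ) (xb : Euc n) (wb : Euc d) : Euc d →L[ℝ] Euc n :=
  fderiv ℝ (fun w => gradient (fun x' => g x' w) xb) wb



section Poly
variable {E : Type*} [NormedAddCommGroup E] [InnerProductSpace ℝ E]

/-- The Farkas lemma for finitely many vectors (inductive proof of Bartl). -/
theorem farkas_finset {ι : Type*} (s : Finset ι) : ∀ (c : ι → E) (ν : E),
    (∀ x : E, (∀ i ∈ s, ⟪c i, x⟫ ≤ 0) → ⟪ν, x⟫ ≤ 0) →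
    ∃ t : ι → ℝ, (∀ i, 0 ≤ t i) ∧ ν = ∑ i ∈ s, t i • c i := by
  induction s using Finset.induction_on with
  | empty =>
    intro c ν h
    refine ⟨fun _ => 0, fun _ => le_rfl, ?_⟩
    have := h ν (by simp)
    rw [Finset.sum_empty]
    rw [real_inner_self_eq_norm_sq] at this
    exact norm_eq_zero.1 (by nlinarith [norm_nonneg ν])
  | insert k s hk ih =>
    intro c ν h
    by_cases hc : ∀ x : E, (∀ i ∈ s, ⟪c i, x⟫ ≤ 0) → ⟪ν, x⟫ ≤ 0
    · obtain ⟨t, ht, hν⟩ := ih c ν hc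
      refine ⟨fun i => if i = k then 0 else t i, fun i => by dsimp only; split_ifs <;> simp [ht], ?_⟩
      rw [Finset.sum_insert hk, hν]
      simp only [if_true, zero_smul, zero_add]
      refine Finset.sum_congr rfl fun i hi => ?_
      rw [if_neg]
      rintro rfl
      exact hk hi
    · push Not at hc
      obtain ⟨x0, hx0, hν0⟩ := hc
      have hpos : 0 < ⟪c k, x0⟫ := by
        by_contra hneg
        push Not at hneg
        refine absurd (h x0 ?_) (not_le.2 hν0)
        intro i hi
        rcases Finset.mem_insert.1 hi with rfl | hi
        · exact hneg
        · exact hx0 i hi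
      set q : ℝ := ⟪c k, x0⟫ with hq
      have key := ih (fun i => c i - (⟪c i, x0⟫ / q) • c k) (ν - (⟪ν, x0⟫ / q) • c k) ?_
      · obtain ⟨t, ht, hν⟩ := key
        refine ⟨fun i => if i = k then (⟪ν, x0⟫ / q) - ∑ i ∈ s, t i * (⟪c i, x0⟫ / q) else t i,
          fun i => ?_, ?_⟩
        · dsimp only
          split_ifs
          · have h1 : ∑ i ∈ s, t i * (⟪c i, x0⟫ / q) ≤ 0 :=
              Finset.sum_nonpos fun i hi => mul_nonpos_of_nonneg_of_nonpos (ht i)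
                (div_nonpos_of_nonpos_of_nonneg (hx0 i hi) hpos.le)
            have h2 : 0 ≤ ⟪ν, x0⟫ / q := div_nonneg hν0.le hpos.le
            linarith
          · exact ht i
        · rw [Finset.sum_insert hk]
          simp only [if_true]
          have h3 : ∑ i ∈ s, (if i = k then (⟪ν, x0⟫ / q) - ∑ i ∈ s, t i * (⟪c i, x0⟫ / q) else t i)
              • c i = ∑ i ∈ s, t i • c i := by
            refine Finset.sum_congr rfl fun i hi => ?_
            rw [if_neg]
            rintro rfl
            exact hk hi
          rw [h3]
          have h4 : ν = (⟪ν, x0⟫ / q) • c k +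
              ∑ i ∈ s, t i • (c i - (⟪c i, x0⟫ / q) • c k) := by
            rw [← hν]; abel
          conv_lhs => rw [h4]
          simp only [smul_sub, Finset.sum_sub_distrib, sub_smul, smul_smul, Finset.sum_smul]
          abel
      · intro x hx
        have := h (x - (⟪c k, x⟫ / q) • x0) ?_
        · rw [inner_sub_right, inner_smul_right] at this
          rw [inner_sub_left, inner_smul_left]
          simp only [conj_trivial]
          calc _ = ⟪ν, x⟫ - ⟪c k, x⟫ / q * ⟪ν, x0⟫ := by ring
            _ ≤ 0 := this
        · intro i hi
          rw [inner_sub_right, inner_smul_right]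
          rcases Finset.mem_insert.1 hi with rfl | hi
          · rw [← hq, div_mul_cancel₀ _ hpos.ne']; simp
          · have := hx i hi
            rw [inner_sub_left, inner_smul_left] at this
            simp only [conj_trivial] at this
            calc _ = ⟪c i, x⟫ - ⟪c i, x0⟫ / q * ⟪c k, x⟫ := by ring
              _ ≤ 0 := this

variable {κ ι : Type*}

/-- Support function of finitely many vectors. -/
def rho (b : κ → E) (s : E) : ℝ := ⨆ i, ⟪b i, s⟫

/-- The polyhedral cone cut out by finitely many vectors. -/
def Pc (d : ι → E) : Set E := {s | ∀ j, ⟪d j, s⟫ ≤ 0}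

theorem le_rho [Finite κ] (b : κ → E) (s : E) (i : κ) : ⟪b i, s⟫ ≤ rho b s :=
  le_ciSup (f := fun i => ⟪b i, s⟫) (Set.finite_range _).bddAbove i

theorem rho_le [Nonempty κ] (b : κ → E) (s : E) {c : ℝ} (h : ∀ i, ⟪b i, s⟫ ≤ c) : rho b s ≤ c :=
  ciSup_le h

theorem rho_exists [Finite κ] [Nonempty κ] (b : κ → E) (s : E) : ∃ i, ⟪b i, s⟫ = rho b s :=
  exists_eq_ciSup_of_finite (f := fun i => ⟪b i, s⟫)

theorem rho_smul [Finite κ] [Nonempty κ] (b : κ → E) (s : E) {t : ℝ} (ht : 0 ≤ t) :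
    rho b (t • s) = t * rho b s := by
  unfold rho
  rw [Real.mul_iSup_of_nonneg ht]
  simp only [inner_smul_right]

theorem rho_add_le [Finite κ] [Nonempty κ] (b : κ → E) (s s' : E) :
    rho b (s + s') ≤ rho b s + rho b s' := by
  refine rho_le _ _ fun i => ?_
  rw [inner_add_right]
  exact add_le_add (le_rho _ _ _) (le_rho _ _ _)

theorem rho_zero [Finite κ] [Nonempty κ] (b : κ → E) : rho b 0 = 0 := by
  have := rho_smul b 0 (le_refl (0 : ℝ))
  simpa using this

theorem rho_continuous [Finite κ] [Nonempty κ] (b : κ → E) : Continuous (rho b) := by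
  have := Fintype.ofFinite κ
  have : rho b = fun s => Finset.univ.sup' Finset.univ_nonempty (fun i => ⟪b i, s⟫) := by
    ext s
    rw [Finset.sup'_univ_eq_ciSup]
    rfl
  rw [this]
  refine Continuous.finset_sup'_apply _ fun i _ => ?_
  fun_prop

theorem Pc_isClosed (d : ι → E) : IsClosed (Pc d) := by
  have : Pc d = ⋂ j, {s | ⟪d j, s⟫ ≤ 0} := by ext; simp [Pc]
  rw [this]
  exact isClosed_iInter fun j => isClosed_le (by fun_prop) (by fun_prop)

theorem Pc_add (d : ι → E) {s s' : E} (h : s ∈ Pc d) (h' : s' ∈ Pc d) : s + s' ∈ Pc d := by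
  intro j
  rw [inner_add_right]
  linarith [h j, h' j]

theorem Pc_smul (d : ι → E) {s : E} {t : ℝ} (ht : 0 ≤ t) (h : s ∈ Pc d) : t • s ∈ Pc d := by
  intro j
  rw [inner_smul_right]
  exact mul_nonpos_of_nonneg_of_nonpos ht (h j)

theorem Pc_zero (d : ι → E) : (0 : E) ∈ Pc d := by intro j; simp

/-- Small subgradients of the polyhedral function are attained only where it vanishes. -/
theorem poly_small [Finite κ] [Nonempty κ] [Finite ι] (b : κ → E) (d : ι → E) :
    ∃ δ > (0 : ℝ), ∀ l s : E, ‖l‖ < δ → s ∈ Pc d → (∀ h ∈ Pc d, ⟪l, h⟫ ≤ rho b h) →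
      ⟪l, s⟫ = rho b s → rho b s ≤ 0 := by
  classical
  -- active sets
  let act : E → Set κ × Set ι := fun s => ({i | ⟪b i, s⟫ = rho b s}, {j | ⟪d j, s⟫ = 0})
  -- for each active pattern realized by a point with positive value choose a bound
  have hloc : ∀ T : Set κ × Set ι, ∃ δ > (0 : ℝ), ∀ l s : E, ‖l‖ < δ → s ∈ Pc d →
      (∀ h ∈ Pc d, ⟪l, h⟫ ≤ rho b h) → ⟪l, s⟫ = rho b s → act s = T → rho b s ≤ 0 := by
    intro T
    by_cases hT : ∃ s0 ∈ Pc d, act s0 = T ∧ 0 < rho b s0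
    · obtain ⟨s0, hs0, rfl, hpos⟩ := hT
      have hne : 0 < ‖s0‖ := by
        rw [norm_pos_iff]
        rintro rfl
        rw [rho_zero] at hpos
        exact lt_irrefl _ hpos
      refine ⟨rho b s0 / ‖s0‖, div_pos hpos hne, ?_⟩
      intro l s hl hs hsub heq hact
      exfalso
      -- consider s - t s0 for small t
      have hact1 : ∀ i, ⟪b i, s⟫ = rho b s ↔ ⟪b i, s0⟫ = rho b s0 := fun i => by
        have := congrArg Prod.fst hact
        exact Set.ext_iff.1 this i
      have hact2 : ∀ j, ⟪d j, s⟫ = 0 ↔ ⟪d j, s0⟫ = 0 := fun j => by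
        have := congrArg Prod.snd hact
        exact Set.ext_iff.1 this j
      have e1 : ∀ᶠ t : ℝ in 𝓝[>] 0, s - t • s0 ∈ Pc d := by
        have : ∀ j, ∀ᶠ t : ℝ in 𝓝[>] 0, ⟪d j, s - t • s0⟫ ≤ 0 := by
          intro j
          by_cases hj : ⟪d j, s⟫ = 0
          · filter_upwards with t
            rw [inner_sub_right, inner_smul_right, hj, (hact2 j).1 hj]; simp
          · have hlt : ⟪d j, s⟫ < 0 := lt_of_le_of_ne (hs j) hj
            have hc : Tendsto (fun t : ℝ => ⟪d j, s - t • s0⟫) (𝓝[>] 0) (𝓝 (⟪d j, s - (0:ℝ) • s0⟫)) :=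
              (Continuous.tendsto (by fun_prop) 0).mono_left nhdsWithin_le_nhds
            rw [zero_smul, sub_zero] at hc
            exact (hc.eventually_lt_const hlt).mono fun _ h => h.le
        exact eventually_all.2 this
      have e2 : ∀ᶠ t : ℝ in 𝓝[>] 0, ∀ i, ⟪b i, s⟫ ≠ rho b s → ⟪b i, s - t • s0⟫ < rho b (s - t • s0) := by
        refine eventually_all.2 fun i => ?_
        by_cases hi : ⟪b i, s⟫ = rho b s
        · filter_upwards with t h; exact absurd hi h
        · have hlt : ⟪b i, s⟫ < rho b s := lt_of_le_of_ne (le_rho _ _ _) hi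
          have hc : Tendsto (fun t : ℝ => rho b (s - t • s0) - ⟪b i, s - t • s0⟫) (𝓝[>] 0)
              (𝓝 (rho b (s - (0:ℝ) • s0) - ⟪b i, s - (0:ℝ) • s0⟫)) :=
            (Continuous.tendsto (((rho_continuous b).comp (by fun_prop)).sub (by fun_prop)) 0).mono_left
              nhdsWithin_le_nhds
          rw [zero_smul, sub_zero] at hc
          filter_upwards [hc.eventually_const_lt (sub_pos.2 hlt)] with t ht _
          linarith
      obtain ⟨t, ⟨ht1, ht2⟩, ht0⟩ := ((e1.and e2).and self_mem_nhdsWithin).exists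
      have ht0 : 0 < t := ht0
      obtain ⟨i, hi⟩ := rho_exists b (s - t • s0)
      have hia : ⟪b i, s⟫ = rho b s := by
        by_contra hne
        exact absurd hi (ht2 i hne).ne
      have h1 := hsub _ ht1
      rw [← hi, inner_sub_right, inner_smul_right, inner_sub_right, inner_smul_right, heq, hia,
        (hact1 i).1 hia] at h1
      have h2 : rho b s0 ≤ ⟪l, s0⟫ := by
        have : t * rho b s0 ≤ t * ⟪l, s0⟫ := by linarith
        exact le_of_mul_le_mul_left this ht0
      have h3 := real_inner_le_norm l s0
      rw [lt_div_iff₀ hne] at hl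
      linarith
    · refine ⟨1, one_pos, ?_⟩
      intro l s _ hs _ _ hact
      by_contra hpos
      exact hT ⟨s, hs, hact, not_le.1 hpos⟩
  choose δ hδ hδ' using hloc
  obtain ⟨T0, hT0⟩ := Finite.exists_min δ
  exact ⟨δ T0, hδ T0, fun l s hl hs h1 h2 => hδ' (act s) l s (hl.trans_le (hT0 _)) hs h1 h2 rfl⟩

/-- The Farkas lemma for the zero set of the polyhedral function. -/
theorem poly_farkas [Fintype κ] [Nonempty κ] [Fintype ι] (b : κ → E) (d : ι → E) (ν : E)
    (hν : ∀ s ∈ Pc d, rho b s ≤ 0 → ⟪ν, s⟫ ≤ 0) :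
    ∃ (t : κ → ℝ) (e : ι → ℝ), (∀ i, 0 ≤ t i) ∧ (∀ j, 0 ≤ e j) ∧
      ν = ∑ i, t i • b i + ∑ j, e j • d j := by
  obtain ⟨t, ht, h⟩ := farkas_finset (Finset.univ : Finset (κ ⊕ ι)) (Sum.elim b d) ν (by
    intro x hx
    refine hν x (fun j => ?_) (rho_le _ _ fun i => ?_)
    · simpa using hx (Sum.inr j) (Finset.mem_univ _)
    · simpa using hx (Sum.inl i) (Finset.mem_univ _))
  refine ⟨fun i => t (Sum.inl i), fun j => t (Sum.inr j), fun i => ht _, fun j => ht _, ?_⟩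
  rw [h, Fintype.sum_sum_type]
  simp

theorem poly_comb_le [Fintype κ] [Nonempty κ] [Fintype ι] (b : κ → E) (d : ι → E)
    (hpos : ∀ s ∈ Pc d, 0 ≤ rho b s) (t : κ → ℝ) (e : ι → ℝ) (ht : ∀ i, 0 ≤ t i)
    (he : ∀ j, 0 ≤ e j) :
    ∃ τ > (0 : ℝ), ∀ s ∈ Pc d, ⟪τ • (∑ i, t i • b i + ∑ j, e j • d j), s⟫ ≤ rho b s := by
  have hT : 0 ≤ ∑ i, t i := Finset.sum_nonneg fun i _ => ht i
  refine ⟨(1 + ∑ i, t i)⁻¹, by positivity, fun s hs => ?_⟩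
  rw [inner_smul_left, inner_add_left, sum_inner, sum_inner]
  simp only [conj_trivial, inner_smul_left]
  rw [inv_mul_le_iff₀ (by positivity)]
  have h1 : ∑ i, t i * ⟪b i, s⟫ ≤ ∑ i, t i * rho b s :=
    Finset.sum_le_sum fun i _ => mul_le_mul_of_nonneg_left (le_rho _ _ _) (ht i)
  have h2 : ∑ j, e j * ⟪d j, s⟫ ≤ 0 :=
    Finset.sum_nonpos fun j _ => mul_nonpos_of_nonneg_of_nonpos (he j) (hs j)
  rw [← Finset.sum_mul] at h1
  have := hpos s hs
  nlinarith

end Poly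


section Tools
variable {E : Type*} [NormedAddCommGroup E] [InnerProductSpace ℝ E] [CompleteSpace E]
variable {E' : Type*} [NormedAddCommGroup E'] [NormedSpace ℝ E']

theorem inner_gradient_eq (f : E → ℝ) (x u : E) : ⟪gradient f x, u⟫ = fderiv ℝ f x u := by
  rw [← toDual_gradient]
  rfl

theorem contDiffAt_gradient {f : E → ℝ} {x : E} (hf : ContDiffAt ℝ 2 f x) :
    ContDiffAt ℝ 1 (gradient f) x := by
  have h1 : ContDiffAt ℝ 1 (fderiv ℝ f) x := hf.fderiv_right (by norm_num)
  exact (InnerProductSpace.toDual ℝ E).symm.toContinuousLinearEquiv.contDiff.contDiffAt.comp x h1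

theorem hess_symm {f : E → ℝ} {x : E} (hf : ContDiffAt ℝ 2 f x) (u w : E) :
    ⟪fderiv ℝ (gradient f) x u, w⟫ = ⟪fderiv ℝ (gradient f) x w, u⟫ := by
  have hsym := hf.isSymmSndFDerivAt (by simp)
  have h1 : DifferentiableAt ℝ (gradient f) x := (contDiffAt_gradient hf).differentiableAt (by norm_num)
  have key : ∀ a c : E, ⟪fderiv ℝ (gradient f) x a, c⟫ = fderiv ℝ (fderiv ℝ f) x a c := by
    intro a c
    have h2 : fderiv ℝ f = fun y => (InnerProductSpace.toDual ℝ E).toContinuousLinearEquiv (gradient f y) := by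
      ext1 y
      exact toDual_gradient.symm
    rw [h2]
    have h3 := ((InnerProductSpace.toDual ℝ E).toContinuousLinearEquiv.hasFDerivAt.comp x h1.hasFDerivAt).fderiv
    simp only [Function.comp_def] at h3
    rw [h3]
    rfl
  rw [key, key]
  exact hsym u w

/-- Quadratic remainder bound for `C²` maps. -/
theorem quad_remainder {f : E → E'} {x : E} (hf : ContDiffAt ℝ 2 f x) :
    ∃ r ≥ (0 : ℝ), ∃ δ > (0 : ℝ), ∀ x1 ∈ ball x δ, ∀ x2 ∈ ball x δ,
      ‖f x2 - f x1 - fderiv ℝ f x1 (x2 - x1)‖ ≤ r * ‖x2 - x1‖ ^ 2 := by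
  have h1 : ContDiffAt ℝ 1 (fderiv ℝ f) x := hf.fderiv_right (by norm_num)
  obtain ⟨K, t, ht, hK⟩ := h1.exists_lipschitzOnWith
  have h2 : ∀ᶠ y in 𝓝 x, DifferentiableAt ℝ f y :=
    (hf.eventually (by simp)).mono fun y hy => hy.differentiableAt (by norm_num)
  obtain ⟨δ, hδ, hb⟩ := Metric.eventually_nhds_iff_ball.1 (h2.and ht)
  refine ⟨K, K.2, δ, hδ, fun x1 h1 x2 h2 => ?_⟩
  have hseg : segment ℝ x1 x2 ⊆ ball x δ := (convex_ball x δ).segment_subset h1 h2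
  have := Convex.norm_image_sub_le_of_norm_fderiv_le' (𝕜 := ℝ) (f := f) (s := segment ℝ x1 x2)
    (C := K * ‖x2 - x1‖) (φ := fderiv ℝ f x1) (x := x1) (y := x2)
    (fun y hy => (hb y (hseg hy)).1) ?_ (convex_segment x1 x2) (left_mem_segment ℝ x1 x2)
    (right_mem_segment ℝ x1 x2)
  · calc _ ≤ _ := this
      _ = _ := by ring
  · intro y hy
    have h3 := hK.norm_sub_le (hb y (hseg hy)).2 (hb x1 h1).2
    refine h3.trans (mul_le_mul_of_nonneg_left ?_ K.2)
    have := norm_sub_le_of_mem_segment hy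
    simpa using this

/-- A strongly monotone Lipschitz map is locally surjective. -/
theorem solve_mono (g : E → E) (vb : E) (ε L : ℝ) (hε : 0 < ε) (hL : 1 ≤ L)
    (hLip : ∀ v ∈ closedBall vb ε, ∀ v' ∈ closedBall vb ε, ‖g v - g v'‖ ≤ L * ‖v - v'‖)
    (hmono : ∀ v ∈ closedBall vb ε, ∀ v' ∈ closedBall vb ε, ‖v - v'‖ ^ 2 ≤ ⟪g v - g v', v - v'⟫) :
    ∀ᶠ c in 𝓝 (g vb), ∃ v ∈ closedBall vb ε, g v = c := by
  set η : ℝ := 1 / L ^ 2 with hη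
  have hL0 : 0 < L := by linarith
  have hη0 : 0 < η := by positivity
  have hη1 : η ≤ 1 := by
    rw [hη, div_le_one (by positivity)]
    nlinarith
  set k : ℝ := Real.sqrt (1 - η) with hk
  have hk0 : 0 ≤ k := Real.sqrt_nonneg _
  have hk1 : k < 1 := by
    rw [hk, Real.sqrt_lt' one_pos]
    linarith
  have hball : ∀ᶠ c in 𝓝 (g vb), ‖g vb - c‖ < (1 - k) * ε / η := by
    have hpos : 0 < (1 - k) * ε / η := div_pos (mul_pos (by linarith) hε) hη0
    filter_upwards [Metric.ball_mem_nhds _ hpos] with c hc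
    rwa [mem_ball_iff_norm, norm_sub_rev] at hc
  filter_upwards [hball] with c hc
  let T : E → E := fun v => v - η • (g v - c)
  have hT : ∀ v ∈ closedBall vb ε, ∀ v' ∈ closedBall vb ε, ‖T v - T v'‖ ≤ k * ‖v - v'‖ := by
    intro v hv v' hv'
    have e : T v - T v' = (v - v') - η • (g v - g v') := by
      simp only [T, smul_sub]; abel
    have h1 : ‖T v - T v'‖ ^ 2 ≤ (k * ‖v - v'‖) ^ 2 := by
      rw [e, norm_sub_sq_real, inner_smul_right, norm_smul, Real.norm_of_nonneg hη0.le,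
        mul_pow, mul_pow, hk, Real.sq_sqrt (by linarith), real_inner_comm]
      have a1 := hmono v hv v' hv'
      have a2 := hLip v hv v' hv'
      have a3 : ‖g v - g v'‖ ^ 2 ≤ L ^ 2 * ‖v - v'‖ ^ 2 := by
        rw [← mul_pow]
        exact pow_le_pow_left₀ (norm_nonneg _) a2 2
      have a4 : η ^ 2 * ‖g v - g v'‖ ^ 2 ≤ η * ‖v - v'‖ ^ 2 := by
        calc η ^ 2 * ‖g v - g v'‖ ^ 2 ≤ η ^ 2 * (L ^ 2 * ‖v - v'‖ ^ 2) :=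
              mul_le_mul_of_nonneg_left a3 (by positivity)
          _ = η * ‖v - v'‖ ^ 2 := by
              rw [hη]; field_simp
      nlinarith [mul_le_mul_of_nonneg_left a1 hη0.le]
    exact abs_le_of_sq_le_sq' h1 (by positivity) |>.2
  have hmaps : MapsTo T (closedBall vb ε) (closedBall vb ε) := by
    intro v hv
    rw [mem_closedBall_iff_norm]
    have h1 := hT v hv vb (mem_closedBall_self hε.le)
    have h2 : ‖T vb - vb‖ ≤ (1 - k) * ε := by
      simp only [T, sub_sub_cancel_left, norm_neg, norm_smul, Real.norm_of_nonneg hη0.le]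
      rw [lt_div_iff₀ hη0] at hc
      linarith
    have h3 : ‖v - vb‖ ≤ ε := by rwa [mem_closedBall_iff_norm] at hv
    calc ‖T v - vb‖ = ‖(T v - T vb) + (T vb - vb)‖ := by congr 1; abel
      _ ≤ _ := norm_add_le _ _
      _ ≤ k * ε + (1 - k) * ε := add_le_add (h1.trans (mul_le_mul_of_nonneg_left h3 hk0)) h2
      _ = ε := by ring
  have hcontr : ContractingWith ⟨k, hk0⟩ (hmaps.restrict T _ _) := by
    refine ⟨by exact_mod_cast hk1, LipschitzWith.of_dist_le_mul fun v v' => ?_⟩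
    rw [Subtype.dist_eq, Subtype.dist_eq, dist_eq_norm, dist_eq_norm]
    exact hT v v.2 v' v'.2
  obtain ⟨v, hv, hfix, -⟩ := hcontr.exists_fixedPoint' isClosed_closedBall.isComplete hmaps
    (mem_closedBall_self hε.le) (edist_ne_top _ _)
  refine ⟨v, hv, ?_⟩
  have : v - η • (g v - c) = v := hfix
  rw [sub_eq_self, smul_eq_zero] at this
  rcases this with h | h
  · exact absurd h hη0.ne'
  · exact sub_eq_zero.1 h

end Tools


section Nec

theorem argmin_real {n dd : ℕ} {φ : Euc n → Euc dd → EReal} {xb : Euc n} {γ : ℝ} {w : Euc dd}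
    {v x : Euc n} {Q : Euc n → Prop} {h : Euc n → ℝ} (hx : x ∈ argminLoc φ xb γ w v)
    (hrep : φ x w = if Q x then ((h x : ℝ) : EReal) else ⊤) :
    Q x ∧ ∀ y, ‖y - xb‖ ≤ γ → (φ y w = if Q y then ((h y : ℝ) : EReal) else ⊤) → Q y →
      h x - ⟪v, x⟫ ≤ h y - ⟪v, y⟫ := by
  obtain ⟨h1, h2, h3⟩ := hx
  have hQ : Q x := by
    by_contra hQ
    rw [if_neg hQ] at hrep
    exact h2 hrep
  refine ⟨hQ, fun y hy hrepy hQy => ?_⟩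
  have := h3 y hy
  rw [hrep, hrepy, if_pos hQ, if_pos hQy, ← EReal.coe_sub, ← EReal.coe_sub,
    EReal.coe_le_coe_iff] at this
  exact this

theorem slope_limits {E : Type*} [NormedAddCommGroup E] [InnerProductSpace ℝ E]
    {X Y : ℝ → E} {u y : E} {K : ℝ} (hX : HasDerivAt X u 0) (hY : HasDerivAt Y y 0)
    (hX0 : X 0 = 0) (hY0 : Y 0 = 0)
    (h1 : ∀ᶠ t in 𝓝[>] (0 : ℝ), ‖X t‖ ≤ K * ‖Y t‖ ∧ 0 ≤ ⟪X t, Y t⟫) :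
    ‖u‖ ≤ K * ‖y‖ ∧ 0 ≤ ⟪u, y⟫ := by
  have tX := hX.tendsto_slope_zero_right
  have tY := hY.tendsto_slope_zero_right
  simp only [zero_add, hX0, hY0, sub_zero] at tX tY
  constructor
  · refine le_of_tendsto_of_tendsto tX.norm (tY.norm.const_mul K) ?_
    filter_upwards [h1, self_mem_nhdsWithin] with t ht ht0
    have ht0 : 0 < t := ht0
    rw [norm_smul, norm_smul]
    calc _ ≤ ‖t⁻¹‖ * (K * ‖Y t‖) := mul_le_mul_of_nonneg_left ht.1 (norm_nonneg _)
      _ = _ := by ring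
  · refine ge_of_tendsto (tX.inner tY) ?_
    filter_upwards [h1, self_mem_nhdsWithin] with t ht ht0
    have ht0 : 0 < t := ht0
    rw [inner_smul_left, inner_smul_right]
    simp only [conj_trivial]
    have := ht.2
    positivity

theorem curve_exists {n : ℕ} {F : Euc n → Euc n} {xb : Euc n} (hF : ContDiffAt ℝ 2 F xb)
    (hF0 : F xb = 0) (hF' : HasFDerivAt F (ContinuousLinearMap.id ℝ (Euc n)) xb) (s : Euc n) :
    ∃ p : ℝ → Euc n, p 0 = xb ∧ HasDerivAt p s 0 ∧ ∀ᶠ t in 𝓝 (0 : ℝ), F (p t) = t • s := by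
  have hs : HasStrictFDerivAt F
      ((ContinuousLinearEquiv.refl ℝ (Euc n) : Euc n ≃L[ℝ] Euc n) : Euc n →L[ℝ] Euc n) xb :=
    hF.hasStrictFDerivAt' hF' (by norm_num)
  have h1 := hs.to_localInverse
  have h2 := hs.localInverse_apply_image
  have h3 := hs.eventually_right_inverse
  rw [hF0] at h1 h2 h3
  set ξ := hs.localInverse F _ xb
  have hlin : HasDerivAt (fun t : ℝ => t • s) s 0 := by
    simpa using (hasDerivAt_id (0 : ℝ)).smul_const s
  refine ⟨fun t => ξ (t • s), by simpa using h2, ?_, ?_⟩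
  · have h4 : HasFDerivAt ξ ((ContinuousLinearEquiv.refl ℝ (Euc n)).symm : Euc n →L[ℝ] Euc n)
        ((0 : ℝ) • s) := by rw [zero_smul]; exact h1.hasFDerivAt
    exact h4.comp_hasDerivAt (0 : ℝ) hlin
  · have : Tendsto (fun t : ℝ => t • s) (𝓝 0) (𝓝 0) := by
      have := hlin.continuousAt.tendsto
      simpa using this
    exact this.eventually h3

variable {κ ι : Type*} [Fintype κ] [Nonempty κ] [Fintype ι]

set_option maxHeartbeats 1000000 in
theorem nec_stationary {n dd : ℕ} {φ : Euc n → Euc dd → EReal} {xb : Euc n} {wb : Euc dd}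
    {vb : Euc n} {γ : ℝ} (hγ : 0 < γ) {V : Set (Euc n)} (hV : V ∈ 𝓝 vb) {σ : Euc n → Euc n}
    {K : ℝ≥0} (hσL : LipschitzOnWith K σ V) (hσ : ∀ v ∈ V, argminLoc φ xb γ wb v = {σ v})
    (hσb : σ vb = xb)
    {f : Euc n → ℝ} {F : Euc n → Euc n} (hf : ContDiffAt ℝ 2 f xb) (hF : ContDiffAt ℝ 2 F xb)
    (b : κ → Euc n) (d : ι → Euc n) (hpos : ∀ s ∈ Pc d, 0 ≤ rho b s)
    (hrep : ∀ᶠ x in 𝓝 xb, φ x wb =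
      if F x ∈ Pc d then ((f x + rho b (F x) : ℝ) : EReal) else ⊤)
    (ν : Euc n) (hν : ∀ s ∈ Pc d, ⟪ν, s⟫ ≤ rho b s) :
    ∃ δ > (0 : ℝ), ∀ x1 ∈ ball xb δ, ∀ t ∈ Icc (0 : ℝ) 1, ∀ v1 ∈ ball vb δ,
      v1 = gradient f x1 + t • ContinuousLinearMap.adjoint (fderiv ℝ F x1) ν →
      F x1 ∈ Pc d → rho b (F x1) = 0 → ⟪ν, F x1⟫ = 0 → v1 ∈ V ∧ σ v1 = x1 := by
  obtain ⟨rf, hrf, δf, hδf, hqf⟩ := quad_remainder hf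
  obtain ⟨rF, hrF, δF, hδF, hqF⟩ := quad_remainder hF
  obtain ⟨δr, hδr, hrep⟩ := Metric.eventually_nhds_iff_ball.1 hrep
  set δ := min (min δf δF) (min δr γ) with hδ
  have hδ0 : 0 < δ := lt_min (lt_min hδf hδF) (lt_min hδr hγ)
  have hδ1 : δ ≤ δf := (min_le_left _ _).trans (min_le_left _ _)
  have hδ2 : δ ≤ δF := (min_le_left _ _).trans (min_le_right _ _)
  have hδ3 : δ ≤ δr := (min_le_right _ _).trans (min_le_left _ _)
  have hδ4 : δ ≤ γ := (min_le_right _ _).trans (min_le_right _ _)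
  obtain ⟨εV, hεV, hVb⟩ := Metric.nhds_basis_closedBall.mem_iff.1 hV
  set ε := min εV (δ / (2 * (K + 1))) with hε
  have hK0 : (0 : ℝ) ≤ K := K.2
  have hε0 : 0 < ε := lt_min hεV (by positivity)
  have hεV' : closedBall vb ε ⊆ V := (closedBall_subset_closedBall (min_le_left _ _)).trans hVb
  have hvbV : vb ∈ V := hVb (mem_closedBall_self hεV.le)
  have hσnear : ∀ v ∈ closedBall vb ε, σ v ∈ ball xb δ := by
    intro v hv
    have h1 := hσL.norm_sub_le (hεV' hv) hvbV
    rw [hσb] at h1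
    rw [mem_ball_iff_norm]
    rw [mem_closedBall_iff_norm] at hv
    have h2 : ‖v - vb‖ ≤ δ / (2 * (K + 1)) := hv.trans (min_le_right _ _)
    calc ‖σ v - xb‖ ≤ K * ‖v - vb‖ := h1
      _ ≤ K * (δ / (2 * (K + 1))) := mul_le_mul_of_nonneg_left h2 hK0
      _ < δ := by
        rw [mul_div_assoc', div_lt_iff₀ (by positivity)]
        nlinarith
  have hmin : ∀ v ∈ closedBall vb ε, F (σ v) ∈ Pc d ∧ ∀ y ∈ ball xb δ, F y ∈ Pc d →
      (f (σ v) + rho b (F (σ v))) - ⟪v, σ v⟫ ≤ (f y + rho b (F y)) - ⟪v, y⟫ := by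
    intro v hv
    have h1 : σ v ∈ argminLoc φ xb γ wb v := by rw [hσ v (hεV' hv)]; rfl
    have h2 := argmin_real (Q := fun x => F x ∈ Pc d) (h := fun x => f x + rho b (F x)) h1
      (hrep _ (ball_subset_ball hδ3 (hσnear v hv)))
    refine ⟨h2.1, fun y hy hFy => h2.2 y ?_ (hrep _ (ball_subset_ball hδ3 hy)) hFy⟩
    rw [mem_ball_iff_norm] at hy
    exact hy.le.trans hδ4
  have hmonoσ : ∀ v ∈ closedBall vb ε, ∀ v' ∈ closedBall vb ε, 0 ≤ ⟪σ v - σ v', v - v'⟫ := by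
    intro v hv v' hv'
    have h1 := (hmin v hv).2 _ (hσnear v' hv') (hmin v' hv').1
    have h2 := (hmin v' hv').2 _ (hσnear v hv) (hmin v hv).1
    rw [real_inner_comm, inner_sub_left, inner_sub_right, inner_sub_right]
    linarith
  set R : ℝ := rf + ‖ν‖ * rF with hR
  have hR0 : 0 ≤ R := by positivity
  have hsolve := solve_mono (fun v => v + (R + 1) • σ v) vb ε (1 + (R + 1) * K) hε0
    (by nlinarith [mul_nonneg (by linarith : 0 ≤ R + 1) hK0]) ?_ ?_
  rotate_left
  · intro v hv v' hv'
    have h1 := hσL.norm_sub_le (hεV' hv) (hεV' hv')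
    have e : v + (R + 1) • σ v - (v' + (R + 1) • σ v') = (v - v') + (R + 1) • (σ v - σ v') := by
      rw [smul_sub]; abel
    rw [e]
    calc _ ≤ ‖v - v'‖ + ‖(R + 1) • (σ v - σ v')‖ := norm_add_le _ _
      _ = ‖v - v'‖ + (R + 1) * ‖σ v - σ v'‖ := by
        rw [norm_smul, Real.norm_of_nonneg (by linarith)]
      _ ≤ ‖v - v'‖ + (R + 1) * (K * ‖v - v'‖) := by gcongr
      _ = _ := by ring
  · intro v hv v' hv'
    have e : v + (R + 1) • σ v - (v' + (R + 1) • σ v') = (v - v') + (R + 1) • (σ v - σ v') := by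
      rw [smul_sub]; abel
    rw [e, inner_add_left, inner_smul_left, real_inner_self_eq_norm_sq]
    simp only [conj_trivial]
    have := mul_nonneg (by linarith : 0 ≤ R + 1) (hmonoσ v hv v' hv')
    linarith
  obtain ⟨δs, hδs, hsolve⟩ := Metric.eventually_nhds_iff_ball.1 hsolve
  refine ⟨min δ (δs / (2 + R)), lt_min hδ0 (by positivity), ?_⟩
  intro x1 hx1 t ht v1 hv1 hv1eq hFx1 hrho1 hν1
  have hx1δ : x1 ∈ ball xb δ := ball_subset_ball (min_le_left _ _) hx1
  obtain ⟨v, hv, hveq⟩ := hsolve (v1 + (R + 1) • x1) (by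
    rw [mem_ball_iff_norm, hσb]
    have e : v1 + (R + 1) • x1 - (vb + (R + 1) • xb) = (v1 - vb) + (R + 1) • (x1 - xb) := by
      rw [smul_sub]; abel
    rw [e]
    have h1 : ‖v1 - vb‖ < δs / (2 + R) := by
      rw [mem_ball_iff_norm] at hv1; exact hv1.trans_le (min_le_right _ _)
    have h2 : ‖x1 - xb‖ < δs / (2 + R) := by
      rw [mem_ball_iff_norm] at hx1; exact hx1.trans_le (min_le_right _ _)
    calc _ ≤ ‖v1 - vb‖ + ‖(R + 1) • (x1 - xb)‖ := norm_add_le _ _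
      _ = ‖v1 - vb‖ + (R + 1) * ‖x1 - xb‖ := by
        rw [norm_smul, Real.norm_of_nonneg (by linarith)]
      _ < δs / (2 + R) + (R + 1) * (δs / (2 + R)) := by
        refine add_lt_add h1 (mul_lt_mul_of_pos_left h2 (by linarith))
      _ = δs := by field_simp; ring)
  have hmv := hmin v hv
  have hx2 := hσnear v hv
  set x2 := σ v with hx2def
  have h1 := hmv.2 x1 hx1δ hFx1
  have h2 := hqf x1 (ball_subset_ball hδ1 hx1δ) x2 (ball_subset_ball hδ1 hx2)
  have h3 := hqF x1 (ball_subset_ball hδ2 hx1δ) x2 (ball_subset_ball hδ2 hx2)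
  rw [← inner_gradient_eq, Real.norm_eq_abs] at h2
  have h2' := (abs_le.1 h2).1
  have h3' : -(‖ν‖ * (rF * ‖x2 - x1‖ ^ 2)) ≤ ⟪ν, F x2 - F x1 - fderiv ℝ F x1 (x2 - x1)⟫ := by
    have := abs_real_inner_le_norm ν (F x2 - F x1 - fderiv ℝ F x1 (x2 - x1))
    have h4 := (abs_le.1 this).1
    have := mul_le_mul_of_nonneg_left h3 (norm_nonneg ν)
    linarith
  rw [inner_sub_right, inner_sub_right, hν1] at h3'
  have h4 : t * ⟪ν, F x2⟫ ≤ rho b (F x2) := by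
    have a1 := hν _ hmv.1
    have a2 := hpos _ hmv.1
    rcases le_total 0 ⟪ν, F x2⟫ with h | h
    · nlinarith [ht.1, ht.2]
    · nlinarith [ht.1, ht.2]
  have h5 : ⟪v1, x2 - x1⟫ = ⟪gradient f x1, x2 - x1⟫ + t * ⟪ν, fderiv ℝ F x1 (x2 - x1)⟫ := by
    rw [hv1eq, inner_add_left, inner_smul_left, ContinuousLinearMap.adjoint_inner_left]
    simp
  have h6 : ⟪v, x2 - x1⟫ = ⟪v1, x2 - x1⟫ - (R + 1) * ‖x2 - x1‖ ^ 2 := by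
    have e : v = v1 - (R + 1) • (x2 - x1) := by
      rw [smul_sub]
      have : v = v1 + (R + 1) • x1 - (R + 1) • x2 := eq_sub_of_add_eq hveq
      rw [this]; abel
    have : ⟪v, x2 - x1⟫ = ⟪v1 - (R + 1) • (x2 - x1), x2 - x1⟫ := by rw [← e]
    rw [this, inner_sub_left, inner_smul_left, real_inner_self_eq_norm_sq]
    simp
  have h7 : ⟪v, x2 - x1⟫ = ⟪v, x2⟫ - ⟪v, x1⟫ := inner_sub_right _ _ _
  have h8 : t * (-(‖ν‖ * (rF * ‖x2 - x1‖ ^ 2))) ≤ t * (⟪ν, F x2⟫ - 0 - ⟪ν, fderiv ℝ F x1 (x2 - x1)⟫) :=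
    mul_le_mul_of_nonneg_left h3' ht.1
  have h9 : t * (‖ν‖ * (rF * ‖x2 - x1‖ ^ 2)) ≤ ‖ν‖ * (rF * ‖x2 - x1‖ ^ 2) := by
    have : 0 ≤ ‖ν‖ * (rF * ‖x2 - x1‖ ^ 2) := by positivity
    nlinarith [ht.2]
  have h10 : ‖x2 - x1‖ ^ 2 ≤ 0 := by
    have : R * ‖x2 - x1‖ ^ 2 = rf * ‖x2 - x1‖ ^ 2 + ‖ν‖ * (rF * ‖x2 - x1‖ ^ 2) := by
      rw [hR]; ring
    rw [hrho1] at h1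
    linarith
  have h11 : x2 = x1 := by
    have : ‖x2 - x1‖ = 0 := pow_eq_zero_iff two_ne_zero |>.1 (le_antisymm h10 (sq_nonneg _))
    exact sub_eq_zero.1 (norm_eq_zero.1 this)
  have h12 : v = v1 := by
    rw [h11] at hveq
    exact add_right_cancel hveq
  rw [← h12]
  exact ⟨hεV' hv, h11⟩

theorem nec_deriv {n dd : ℕ} {φ : Euc n → Euc dd → EReal} {xb : Euc n} {wb : Euc dd}
    {vb : Euc n} (hfs : FullyStableSol φ xb wb vb)
    {f : Euc n → ℝ} {F : Euc n → Euc n} (hf : ContDiffAt ℝ 2 f xb) (hF : ContDiffAt ℝ 2 F xb)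
    (hF0 : F xb = 0) (hF' : HasFDerivAt F (ContinuousLinearMap.id ℝ (Euc n)) xb)
    (b : κ → Euc n) (d : ι → Euc n) (hpos : ∀ s ∈ Pc d, 0 ≤ rho b s)
    (hrep : ∀ᶠ x in 𝓝 xb, φ x wb =
      if F x ∈ Pc d then ((f x + rho b (F x) : ℝ) : EReal) else ⊤)
    (hvb : gradient f xb = vb) :
    ∃ K : ℝ, ∀ ν : Euc n, (∀ s ∈ Pc d, ⟪ν, s⟫ ≤ rho b s) →
      (∀ s ∈ Pc d, rho b s = 0 → ⟪ν, s⟫ = 0) →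
      ∀ s1 ∈ Pc d, rho b s1 = 0 → ∀ s2 ∈ Pc d, rho b s2 = 0 →
      ‖s1 - s2‖ ≤ K * ‖fderiv ℝ (gradient f) xb (s1 - s2) + ν‖ ∧
      0 ≤ ⟪s1 - s2, fderiv ℝ (gradient f) xb (s1 - s2) + ν⟫ := by
  obtain ⟨γ, hγ, W, hW, V, hV, ⟨σ, ⟨K, hσL⟩, hσ, hσb⟩, -⟩ := hfs
  have hwW : wb ∈ W := mem_of_mem_nhds hW
  refine ⟨K, fun ν hν hν0 s1 hs1 hr1 s2 hs2 hr2 => ?_⟩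
  have hσL' : LipschitzOnWith K (fun v => σ (wb, v)) V := by
    refine LipschitzOnWith.of_dist_le_mul fun v hv v' hv' => ?_
    have := hσL.dist_le_mul (wb, v) ⟨hwW, hv⟩ (wb, v') ⟨hwW, hv'⟩
    simpa [Prod.dist_eq] using this
  obtain ⟨δ, hδ, hst⟩ := nec_stationary hγ hV hσL' (fun v hv => hσ wb hwW v hv) hσb hf hF b d hpos
    hrep ν hν
  obtain ⟨p1, hp10, hp1d, hp1F⟩ := curve_exists hF hF0 hF' s1
  obtain ⟨p2, hp20, hp2d, hp2F⟩ := curve_exists hF hF0 hF' s2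
  have hgd : DifferentiableAt ℝ (gradient f) xb := (contDiffAt_gradient hf).differentiableAt (by norm_num)
  have hg1 : HasDerivAt (fun t => gradient f (p1 t)) (fderiv ℝ (gradient f) xb s1) 0 := by
    have : HasFDerivAt (gradient f) (fderiv ℝ (gradient f) xb) (p1 0) := by
      rw [hp10]; exact hgd.hasFDerivAt
    exact this.comp_hasDerivAt (0 : ℝ) hp1d
  have hg2 : HasDerivAt (fun t => gradient f (p2 t)) (fderiv ℝ (gradient f) xb s2) 0 := by
    have : HasFDerivAt (gradient f) (fderiv ℝ (gradient f) xb) (p2 0) := by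
      rw [hp20]; exact hgd.hasFDerivAt
    exact this.comp_hasDerivAt (0 : ℝ) hp2d
  have hk : ContinuousAt (fun t => ContinuousLinearMap.adjoint (fderiv ℝ F (p1 t)) ν) 0 := by
    have h1 : ContinuousAt (fderiv ℝ F) (p1 0) := by
      rw [hp10]
      exact (hF.fderiv_right (m := 1) (by norm_num)).continuousAt
    have h2 : ContinuousAt (fun t => fderiv ℝ F (p1 t)) 0 := h1.comp hp1d.continuousAt
    have h3 : ContinuousAt (fun t => ContinuousLinearMap.adjoint (fderiv ℝ F (p1 t))) 0 :=
      ((ContinuousLinearMap.adjoint (𝕜 := ℝ) (E := Euc n) (F := Euc n)).continuous.continuousAt).comp h2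
    exact h3.clm_apply continuousAt_const
  have hk0 : ContinuousLinearMap.adjoint (fderiv ℝ F (p1 0)) ν = ν := by
    rw [hp10, hF'.fderiv, ContinuousLinearMap.adjoint_id]
    rfl
  have hm : HasDerivAt (fun t : ℝ => t • ContinuousLinearMap.adjoint (fderiv ℝ F (p1 t)) ν) ν 0 := by
    rw [hasDerivAt_iff_tendsto_slope_zero]
    have := hk.tendsto
    rw [hk0] at this
    refine (this.mono_left nhdsWithin_le_nhds).congr' ?_
    filter_upwards [self_mem_nhdsWithin] with t ht
    have ht : t ≠ 0 := ht
    simp [smul_smul, ht]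
  have hX := hp1d.sub hp2d
  have hY := (hg1.add hm).sub hg2
  have e : fderiv ℝ (gradient f) xb s1 + ν - fderiv ℝ (gradient f) xb s2 =
      fderiv ℝ (gradient f) xb (s1 - s2) + ν := by
    rw [map_sub]; abel
  rw [e] at hY
  refine slope_limits hX hY (by simp [hp10, hp20]) (by simp [hp10, hp20]) ?_
  -- near points
  have c1 : ∀ᶠ t in 𝓝 (0 : ℝ), p1 t ∈ ball xb δ := by
    have := hp1d.continuousAt.tendsto
    rw [hp10] at this
    exact this.eventually (ball_mem_nhds _ hδ)
  have c2 : ∀ᶠ t in 𝓝 (0 : ℝ), p2 t ∈ ball xb δ := by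
    have := hp2d.continuousAt.tendsto
    rw [hp20] at this
    exact this.eventually (ball_mem_nhds _ hδ)
  have c3 : ∀ᶠ t in 𝓝 (0 : ℝ), gradient f (p1 t) + t • ContinuousLinearMap.adjoint (fderiv ℝ F (p1 t)) ν
      ∈ ball vb δ := by
    have := (hg1.add hm).continuousAt.tendsto
    simp only [Pi.add_apply, hp10, hvb, zero_smul, add_zero] at this
    exact this.eventually (ball_mem_nhds _ hδ)
  have c4 : ∀ᶠ t in 𝓝 (0 : ℝ), gradient f (p2 t) ∈ ball vb δ := by
    have := hg2.continuousAt.tendsto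
    simp only [hp20, hvb] at this
    exact this.eventually (ball_mem_nhds _ hδ)
  have c6 : ∀ᶠ t in 𝓝 (0 : ℝ), φ (p1 t) wb =
      if F (p1 t) ∈ Pc d then ((f (p1 t) + rho b (F (p1 t)) : ℝ) : EReal) else ⊤ := by
    have := hp1d.continuousAt.tendsto
    rw [hp10] at this
    exact this.eventually hrep
  have c7 : ∀ᶠ t in 𝓝 (0 : ℝ), φ (p2 t) wb =
      if F (p2 t) ∈ Pc d then ((f (p2 t) + rho b (F (p2 t)) : ℝ) : EReal) else ⊤ := by
    have := hp2d.continuousAt.tendsto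
    rw [hp20] at this
    exact this.eventually hrep
  have c5 : ∀ᶠ t in 𝓝[>] (0 : ℝ), t < 1 := nhdsWithin_le_nhds (Iio_mem_nhds one_pos)
  filter_upwards [nhdsWithin_le_nhds c1, nhdsWithin_le_nhds c2, nhdsWithin_le_nhds c3,
    nhdsWithin_le_nhds c4, nhdsWithin_le_nhds c6, nhdsWithin_le_nhds c7, nhdsWithin_le_nhds hp1F, nhdsWithin_le_nhds hp2F, c5,
    self_mem_nhdsWithin] with t a1 a2 a3 a4 r1 r2 a5 a6 a7 a8
  have a8 : 0 < t := a8
  have b1 := hst (p1 t) a1 t ⟨a8.le, a7.le⟩ _ a3 rfl (by rw [a5]; exact Pc_smul d a8.le hs1)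
    (by rw [a5, rho_smul _ _ a8.le, hr1, mul_zero])
    (by rw [a5, inner_smul_right, hν0 s1 hs1 hr1, mul_zero])
  have b2 := hst (p2 t) a2 0 ⟨le_rfl, zero_le_one⟩ _ a4 (by simp) (by rw [a6]; exact Pc_smul d a8.le hs2)
    (by rw [a6, rho_smul _ _ a8.le, hr2, mul_zero])
    (by rw [a6, inner_smul_right, hν0 s2 hs2 hr2, mul_zero])
  constructor
  · have := hσL'.norm_sub_le b1.1 b2.1
    rw [b1.2, b2.2] at this
    exact this
  · -- monotonicity through the two minimality inequalities
    have m1 : p1 t ∈ argminLoc φ xb γ wb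
        (gradient f (p1 t) + t • ContinuousLinearMap.adjoint (fderiv ℝ F (p1 t)) ν) := by
      rw [hσ wb hwW _ b1.1, b1.2]; rfl
    have m2 : p2 t ∈ argminLoc φ xb γ wb (gradient f (p2 t)) := by
      rw [hσ wb hwW _ b2.1, b2.2]; rfl
    have q1 := argmin_real (Q := fun x => F x ∈ Pc d) (h := fun x => f x + rho b (F x)) m1 r1
    have q2 := argmin_real (Q := fun x => F x ∈ Pc d) (h := fun x => f x + rho b (F x)) m2 r2
    have i1 := q1.2 _ m2.1 r2 q2.1
    have i2 := q2.2 _ m1.1 r1 q1.1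
    simp only [Pi.sub_apply, Pi.add_apply]
    generalize gradient f (p1 t) + t • ContinuousLinearMap.adjoint (fderiv ℝ F (p1 t)) ν = v1 at i1 ⊢
    rw [real_inner_comm, inner_sub_left, inner_sub_right, inner_sub_right]
    linarith

theorem necessity {n dd : ℕ} {φ : Euc n → Euc dd → EReal} {xb : Euc n} {wb : Euc dd}
    {vb : Euc n} (hfs : FullyStableSol φ xb wb vb)
    {f : Euc n → ℝ} {F : Euc n → Euc n} (hf : ContDiffAt ℝ 2 f xb) (hF : ContDiffAt ℝ 2 F xb)
    (hF0 : F xb = 0) (hF' : HasFDerivAt F (ContinuousLinearMap.id ℝ (Euc n)) xb)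
    (b : κ → Euc n) (d : ι → Euc n) (hpos : ∀ s ∈ Pc d, 0 ≤ rho b s)
    (hrep : ∀ᶠ x in 𝓝 xb, φ x wb =
      if F x ∈ Pc d then ((f x + rho b (F x) : ℝ) : EReal) else ⊤)
    (hvb : gradient f xb = vb) (s1 s2 : Euc n) (hs1 : s1 ∈ Pc d) (hr1 : rho b s1 = 0)
    (hs2 : s2 ∈ Pc d) (hr2 : rho b s2 = 0) (hne : s1 - s2 ≠ 0) :
    0 < ⟪s1 - s2, fderiv ℝ (gradient f) xb (s1 - s2)⟫ := by
  obtain ⟨K, hK⟩ := nec_deriv hfs hf hF hF0 hF' b d hpos hrep hvb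
  set H := fderiv ℝ (gradient f) xb with hH
  have hsym : ∀ u w, ⟪H u, w⟫ = ⟪u, H w⟫ := fun u w => by
    rw [real_inner_comm (H w) u]; exact hess_symm hf u w
  have hnn : ∀ s1 ∈ Pc d, rho b s1 = 0 → ∀ s2 ∈ Pc d, rho b s2 = 0 →
      0 ≤ ⟪s1 - s2, H (s1 - s2)⟫ := by
    intro s1 hs1 hr1 s2 hs2 hr2
    have := (hK 0 (fun s hs => by simpa using hpos s hs) (fun s _ _ => by simp) s1 hs1 hr1 s2 hs2 hr2).2
    simpa using this
  have hadd : ∀ s ∈ Pc d, rho b s = 0 → ∀ s' ∈ Pc d, rho b s' = 0 → ∀ t : ℝ, 0 ≤ t →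
      s + t • s' ∈ Pc d ∧ rho b (s + t • s') = 0 := by
    intro s hs hr s' hs' hr' t ht
    have h1 : s + t • s' ∈ Pc d := Pc_add d hs (Pc_smul d ht hs')
    refine ⟨h1, le_antisymm ?_ (hpos _ h1)⟩
    have := rho_add_le b s (t • s')
    rw [rho_smul b s' ht, hr, hr'] at this
    linarith
  refine lt_of_le_of_ne (hnn s1 hs1 hr1 s2 hs2 hr2) fun h0 => ?_
  set u := s1 - s2 with hu
  have horth : ∀ y ∈ Pc d, rho b y = 0 → ⟪H u, y⟫ = 0 := by
    intro y hy hry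
    have key : ∀ t : ℝ, 0 ≤ 2 * t * ⟪H u, y⟫ + t ^ 2 * ⟪y, H y⟫ := by
      intro t
      have hq : 0 ≤ ⟪u + t • y, H (u + t • y)⟫ := by
        rcases le_total 0 t with ht | ht
        · have h1 := hadd s1 hs1 hr1 y hy hry t ht
          have := hnn _ h1.1 h1.2 s2 hs2 hr2
          have e : s1 + t • y - s2 = u + t • y := by rw [hu]; abel
          rwa [e] at this
        · have h1 := hadd s2 hs2 hr2 y hy hry (-t) (by linarith)
          have := hnn s1 hs1 hr1 _ h1.1 h1.2
          have e : s1 - (s2 + (-t) • y) = u + t • y := by rw [hu, neg_smul]; abel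
          rwa [e] at this
      rw [map_add, map_smul, inner_add_left, inner_add_right, inner_add_right, inner_smul_left,
        inner_smul_right, inner_smul_left, inner_smul_right, ← h0] at hq
      simp only [conj_trivial] at hq
      have e1 : ⟪u, H y⟫ = ⟪H u, y⟫ := (hsym u y).symm
      have e2 : ⟪y, H u⟫ = ⟪H u, y⟫ := real_inner_comm _ _
      rw [e1, e2] at hq
      nlinarith
    by_contra hc
    set p := ⟪H u, y⟫
    set q := ⟪y, H y⟫
    have hq0 : 0 < |q| + 1 := by positivity
    have := key (-p / (|q| + 1))
    have hp2 : 0 < p ^ 2 := by positivity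
    have e : 2 * (-p / (|q| + 1)) * p + (-p / (|q| + 1)) ^ 2 * q =
        (p ^ 2 / (|q| + 1) ^ 2) * (q - 2 * (|q| + 1)) := by
      field_simp
      ring
    rw [e] at this
    have h3 : 0 < p ^ 2 / (|q| + 1) ^ 2 := by positivity
    have h4 : q - 2 * (|q| + 1) < 0 := by nlinarith [le_abs_self q, abs_nonneg q]
    nlinarith
  obtain ⟨t, e, ht, he, hνeq⟩ := poly_farkas b d (-(H u)) (by
    intro s hs hr
    rw [inner_neg_left, horth s hs (le_antisymm hr (hpos s hs)), neg_zero])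
  obtain ⟨τ, hτ, hτle⟩ := poly_comb_le b d hpos t e ht he
  rw [← hνeq] at hτle
  have h1 := (hK (τ • -(H u)) hτle (fun s hs hr => by
    rw [inner_smul_left, inner_neg_left, horth s hs hr]; simp) (τ • s1) (Pc_smul d hτ.le hs1)
    (by rw [rho_smul _ _ hτ.le, hr1, mul_zero]) (τ • s2) (Pc_smul d hτ.le hs2)
    (by rw [rho_smul _ _ hτ.le, hr2, mul_zero])).1
  rw [← smul_sub, ← hu, map_smul, smul_neg, add_neg_cancel, norm_zero, mul_zero] at h1
  have h2 : τ • u = 0 := norm_le_zero_iff.1 h1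
  rcases smul_eq_zero.1 h2 with h | h
  · exact hτ.ne' h
  · exact hne h

end Nec


section LocRep

/-- Local polyhedral representation of an extended-real-valued function. -/
structure LocRep {E κ ι : Type*} [NormedAddCommGroup E] [InnerProductSpace ℝ E] (θ : E → EReal)
    (zb lam : E) (b : κ → E) (d : ι → E) (c0 : ℝ) : Prop where
  loc : ∀ᶠ z in 𝓝 zb, θ z =
    if z - zb ∈ Pc d then ((c0 + ⟪lam, z - zb⟫ + rho b (z - zb) : ℝ) : EReal) else ⊤
  glob : ∀ z, θ z ≠ ⊤ → z - zb ∈ Pc d ∧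
    ((c0 + ⟪lam, z - zb⟫ + rho b (z - zb) : ℝ) : EReal) ≤ θ z

theorem cpwl_locRep {m l p : ℕ} (hl : 0 < l)
    (a : Fin l → Euc m) (α : Fin l → ℝ) (d : Fin p → Euc m) (β : Fin p → ℝ)
    (zb lam : Euc m) (hzb : zb ∈ cpwlDom d β) :
    Nonempty (Kact a α d β zb) ∧
    ∃ c0 : ℝ, LocRep (cpwlFun a α d β) zb lam (fun i : Kact a α d β zb => a i - lam)
      (fun j : Iact d β zb => d j) c0 := by
  haveI : Nonempty (Fin l) := ⟨⟨0, hl⟩⟩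
  set g : Fin l → Euc m → ℝ := fun i z => ⟪a i, z⟫ - α i with hg
  have hbdd : ∀ z, BddAbove (range fun i => g i z) := fun z => Set.finite_range _ |>.bddAbove
  set c0 : ℝ := ⨆ i, g i zb with hc0
  have hval : ∀ z ∈ cpwlDom d β, cpwlFun a α d β z = ((⨆ i, g i z : ℝ) : EReal) := by
    intro z hz
    exact if_pos hz
  have hK : ∀ i, i ∈ Kact a α d β zb ↔ g i zb = c0 := by
    intro i
    show cpwlFun a α d β zb = _ ↔ _
    rw [hval zb hzb, EReal.coe_eq_coe_iff, eq_comm]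
  obtain ⟨i0, hi0⟩ := exists_eq_ciSup_of_finite (f := fun i => g i zb)
  have hi0K : i0 ∈ Kact a α d β zb := (hK i0).2 hi0
  haveI : Nonempty (Kact a α d β zb) := ⟨⟨i0, hi0K⟩⟩
  refine ⟨inferInstance, c0, ?_, ?_⟩
  · have hcont : ∀ i, Continuous (g i) := fun i => by rw [hg]; fun_prop
    have h1 : ∀ᶠ z in 𝓝 zb, ∀ i, i ∉ Kact a α d β zb → g i z < g i0 z := by
      refine eventually_all.2 fun i => ?_
      by_cases hi : i ∈ Kact a α d β zb
      · exact Eventually.of_forall fun z h => absurd hi h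
      · have : g i zb < g i0 zb := by
          rw [hi0]
          exact lt_of_le_of_ne (le_ciSup (hbdd zb) i) (fun h => hi ((hK i).2 h))
        filter_upwards [(hcont i).continuousAt.eventually_lt (hcont i0).continuousAt this] with z hz _
        exact hz
    have h2 : ∀ᶠ z in 𝓝 zb, ∀ j, j ∉ Iact d β zb → ⟪d j, z⟫ < β j := by
      refine eventually_all.2 fun j => ?_
      by_cases hj : j ∈ Iact d β zb
      · exact Eventually.of_forall fun z h => absurd hj h
      · have : ⟪d j, zb⟫ < β j := lt_of_le_of_ne (hzb j) hj
        have hc : Continuous fun z => ⟪d j, z⟫ := by fun_prop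
        filter_upwards [hc.continuousAt.eventually_lt continuousAt_const this] with z hz _
        exact hz
    filter_upwards [h1, h2] with z hz1 hz2
    have hiff : z ∈ cpwlDom d β ↔ z - zb ∈ Pc (fun j : Iact d β zb => d j) := by
      constructor
      · intro hz j
        have h3 : ⟪d j, zb⟫ = β j := j.2
        have := hz j
        rw [inner_sub_right, h3]
        linarith
      · intro hz j
        by_cases hj : j ∈ Iact d β zb
        · have := hz ⟨j, hj⟩
          have h3 : ⟪d j, zb⟫ = β j := hj
          simp only [inner_sub_right] at this
          linarith
        · exact (hz2 j hj).le
    by_cases hz : z ∈ cpwlDom d β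
    · rw [if_pos (hiff.1 hz), hval z hz, EReal.coe_eq_coe_iff]
      apply le_antisymm
      · refine ciSup_le fun i => ?_
        have key : ∀ i ∈ Kact a α d β zb, g i z ≤ c0 + ⟪lam, z - zb⟫ +
            rho (fun i : Kact a α d β zb => a i - lam) (z - zb) := by
          intro i hi
          have h4 := le_rho (fun i : Kact a α d β zb => a i - lam) (z - zb) ⟨i, hi⟩
          have h5 := (hK i).1 hi
          simp only [hg, inner_sub_right, inner_sub_left] at h4 h5 ⊢
          linarith
        by_cases hi : i ∈ Kact a α d β zb
        · exact key i hi
        · exact (hz1 i hi).le.trans (key i0 hi0K)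
      · have : rho (fun i : Kact a α d β zb => a i - lam) (z - zb) ≤
            (⨆ i, g i z) - c0 - ⟪lam, z - zb⟫ := by
          refine rho_le _ _ fun i => ?_
          have h4 := le_ciSup (hbdd z) i.1
          have h5 := (hK i.1).1 i.2
          simp only [hg, inner_sub_right, inner_sub_left] at h4 h5 ⊢
          linarith
        linarith
    · rw [if_neg (fun h => hz (hiff.2 h))]
      exact if_neg hz
  · intro z hz
    have hz : z ∈ cpwlDom d β := by
      by_contra h
      exact hz (if_neg h)
    refine ⟨fun j => ?_, ?_⟩
    · have h3 : ⟪d j, zb⟫ = β j := j.2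
      have := hz j
      rw [inner_sub_right, h3]
      linarith
    · rw [hval z hz, EReal.coe_le_coe_iff]
      have : rho (fun i : Kact a α d β zb => a i - lam) (z - zb) ≤
            (⨆ i, g i z) - c0 - ⟪lam, z - zb⟫ := by
          refine rho_le _ _ fun i => ?_
          have h4 := le_ciSup (hbdd z) i.1
          have h5 := (hK i.1).1 i.2
          simp only [hg, inner_sub_right, inner_sub_left] at h4 h5 ⊢
          linarith
      linarith

namespace LocRep

variable {E κ ι : Type*} [NormedAddCommGroup E] [InnerProductSpace ℝ E] [Finite κ] [Nonempty κ]
  {θ : E → EReal} {zb lam : E} {b : κ → E} {d : ι → E} {c0 : ℝ}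

theorem val (h : LocRep θ zb lam b d c0) : θ zb = (c0 : EReal) := by
  have := h.loc.self_of_nhds
  rw [sub_self, if_pos (Pc_zero d), rho_zero, inner_zero_right] at this
  simpa using this

/-- Subgradients near the reference point. -/
theorem sub_near (h : LocRep θ zb lam b d c0) : ∀ᶠ z in 𝓝 zb, ∀ μ ∈ subdiff θ z,
    z - zb ∈ Pc d ∧ ⟪μ - lam, z - zb⟫ = rho b (z - zb) ∧
      ∀ g ∈ Pc d, ⟪μ - lam, g⟫ ≤ rho b g := by
  filter_upwards [h.loc.eventually_nhds] with z hz μ hμ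
  have hz0 := hz.self_of_nhds
  have hPc : z - zb ∈ Pc d := by
    by_contra hc
    rw [if_neg hc] at hz0
    have := hμ zb
    rw [hz0, h.val, EReal.top_add_coe] at this
    exact absurd this (not_le.2 (EReal.coe_lt_top _))
  rw [if_pos hPc] at hz0
  have hloc : ∀ᶠ z' in 𝓝 z, z' - zb ∈ Pc d →
      ⟪μ - lam, z' - z⟫ ≤ rho b (z' - zb) - rho b (z - zb) := by
    filter_upwards [hz] with z' hz' hP
    have := hμ z'
    rw [hz', if_pos hP, hz0, ← EReal.coe_add, EReal.coe_le_coe_iff] at this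
    have e : ⟪lam, z' - zb⟫ = ⟪lam, z' - z⟫ + ⟪lam, z - zb⟫ := by
      rw [← inner_add_right]; congr 1; abel
    rw [inner_sub_left]
    linarith
  have hline : ∀ g : E, ∀ᶠ t in 𝓝[>] (0 : ℝ), z + t • g - zb ∈ Pc d →
      t * ⟪μ - lam, g⟫ ≤ rho b (z + t • g - zb) - rho b (z - zb) := by
    intro g
    have hc : Tendsto (fun t : ℝ => z + t • g) (𝓝[>] 0) (𝓝 z) := by
      have : Continuous (fun t : ℝ => z + t • g) := by fun_prop
      have h1 := this.tendsto 0
      simp only [zero_smul, add_zero] at h1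
      exact h1.mono_left nhdsWithin_le_nhds
    filter_upwards [hc.eventually hloc] with t ht hP
    have := ht hP
    rw [add_sub_cancel_left, inner_smul_right] at this
    exact this
  have hle : ∀ g ∈ Pc d, ⟪μ - lam, g⟫ ≤ rho b g := by
    intro g hg
    obtain ⟨t, ht, ht0⟩ := ((hline g).and self_mem_nhdsWithin).exists
    have ht0 : 0 < t := ht0
    have e : z + t • g - zb = (z - zb) + t • g := by abel
    rw [e] at ht
    have h1 := ht (Pc_add d hPc (Pc_smul d ht0.le hg))
    have h2 := rho_add_le b (z - zb) (t • g)
    rw [rho_smul b g ht0.le] at h2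
    have : t * ⟪μ - lam, g⟫ ≤ t * rho b g := by linarith
    exact le_of_mul_le_mul_left this ht0
  refine ⟨hPc, le_antisymm (hle _ hPc) ?_, hle⟩
  obtain ⟨t, ⟨ht, ht1⟩, ht0⟩ := (((hline (-(z - zb))).and
    (nhdsWithin_le_nhds (Iio_mem_nhds one_pos) : ∀ᶠ t in 𝓝[>] (0 : ℝ), t < 1)).and
    self_mem_nhdsWithin).exists
  have ht0 : 0 < t := ht0
  have e : z + t • -(z - zb) - zb = (1 - t) • (z - zb) := by
    rw [sub_smul, one_smul, smul_neg]; abel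
  rw [e] at ht
  have h1 := ht (Pc_smul d (by linarith) hPc)
  rw [rho_smul b _ (by linarith), inner_neg_right] at h1
  have : t * rho b (z - zb) ≤ t * ⟪μ - lam, z - zb⟫ := by linarith
  exact le_of_mul_le_mul_left this ht0

/-- A sufficient condition for being a subgradient near the reference point. -/
theorem sub_of (h : LocRep θ zb lam b d c0) : ∀ᶠ z in 𝓝 zb, ∀ μ, z - zb ∈ Pc d →
    ⟪μ - lam, z - zb⟫ = rho b (z - zb) → (∀ g ∈ Pc d, ⟪μ - lam, g⟫ ≤ rho b g) →
      μ ∈ subdiff θ z := by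
  filter_upwards [h.loc] with z hz μ hP he hle z'
  rw [if_pos hP] at hz
  rw [hz, ← EReal.coe_add]
  by_cases ht : θ z' = ⊤
  · rw [ht]; exact le_top
  · obtain ⟨h1, h2⟩ := h.glob z' ht
    refine le_trans ?_ h2
    rw [EReal.coe_le_coe_iff]
    have := hle _ h1
    have e : z' - zb = (z' - z) + (z - zb) := by abel
    have e1 : ⟪lam, z' - zb⟫ = ⟪lam, z' - z⟫ + ⟪lam, z - zb⟫ := by
      rw [← inner_add_right, ← e]
    have e2 : ⟪μ - lam, z' - zb⟫ = ⟪μ - lam, z' - z⟫ + ⟪μ - lam, z - zb⟫ := by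
      rw [← inner_add_right, ← e]
    rw [inner_sub_left μ lam (z' - z)] at e2
    linarith

theorem sub_iff (h : LocRep θ zb lam b d c0) (μ : E) :
    μ ∈ subdiff θ zb ↔ ∀ g ∈ Pc d, ⟪μ - lam, g⟫ ≤ rho b g := by
  constructor
  · exact fun hμ => (h.sub_near.self_of_nhds μ hμ).2.2
  · intro hle
    refine h.sub_of.self_of_nhds μ ?_ ?_ hle
    · rw [sub_self]; exact Pc_zero d
    · rw [sub_self, inner_zero_right, rho_zero]

theorem pos (h : LocRep θ zb lam b d c0) (hlam : lam ∈ subdiff θ zb) :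
    ∀ s ∈ Pc d, 0 ≤ rho b s := by
  intro s hs
  simpa using (h.sub_iff lam).1 hlam s hs

theorem sub_incl (h : LocRep θ zb lam b d c0) :
    ∀ᶠ z in 𝓝 zb, subdiff θ z ⊆ subdiff θ zb := by
  filter_upwards [h.sub_near] with z hz μ hμ
  exact (h.sub_iff μ).2 (hz μ hμ).2.2

theorem b_mem (h : LocRep θ zb lam b d c0) (hlam : lam ∈ subdiff θ zb) (i : κ) :
    b i ∈ Spar θ zb := by
  have h1 : lam + b i ∈ subdiff θ zb := by
    rw [h.sub_iff]
    intro g _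
    rw [add_sub_cancel_left]
    exact le_rho b g i
  have := AffineSubspace.vsub_mem_direction (mem_affineSpan ℝ h1) (mem_affineSpan ℝ hlam)
  simpa [Spar] using this

theorem d_mem (h : LocRep θ zb lam b d c0) (hlam : lam ∈ subdiff θ zb) (j : ι) :
    d j ∈ Spar θ zb := by
  have h1 : lam + d j ∈ subdiff θ zb := by
    rw [h.sub_iff]
    intro g hg
    rw [add_sub_cancel_left]
    exact (hg j).trans (h.pos hlam g hg)
  have := AffineSubspace.vsub_mem_direction (mem_affineSpan ℝ h1) (mem_affineSpan ℝ hlam)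
  simpa [Spar] using this

end LocRep

end LocRep


section Sosd

variable {E : Type*} [NormedAddCommGroup E] [InnerProductSpace ℝ E]

theorem quot_le_norm (v y : E) : |⟪v, y⟫ / ‖y‖| ≤ ‖v‖ := by
  rw [abs_div, abs_norm]
  rcases eq_or_ne ‖y‖ 0 with h | h
  · rw [h, div_zero]; exact norm_nonneg _
  · rw [div_le_iff₀ (lt_of_le_of_ne (norm_nonneg _) h.symm)]
    exact abs_real_inner_le_norm v y

theorem frechet_of_eventually {Ω : Set E} {x v : E} (hx : x ∈ Ω)
    (h : ∀ᶠ y in 𝓝[Ω] x, ⟪v, y - x⟫ ≤ 0) : v ∈ frechetNormal Ω x := by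
  have : NeBot (𝓝[Ω] x) := mem_closure_iff_nhdsWithin_neBot.1 (subset_closure hx)
  show limsup (fun y => ⟪v, y - x⟫ / ‖y - x‖) (𝓝[Ω] x) ≤ 0
  refine limsup_le_of_le ?_ ?_
  · refine IsBoundedUnder.isCoboundedUnder_le ⟨-‖v‖, ?_⟩
    rw [eventually_map]
    exact Eventually.of_forall fun y => (abs_le.1 (quot_le_norm v (y - x))).1
  · filter_upwards [h] with y hy
    exact div_nonpos_of_nonpos_of_nonneg hy (norm_nonneg _)

theorem frechet_dir {Ω : Set E} {x v e : E} (hv : v ∈ frechetNormal Ω x)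
    (he : ∀ t : ℝ, 0 < t → t ≤ 1 → x + t • e ∈ Ω) : ⟪v, e⟫ ≤ 0 := by
  by_contra hc
  push Not at hc
  have hene : e ≠ 0 := by
    rintro rfl
    simp at hc
  have hen : 0 < ‖e‖ := norm_pos_iff.2 hene
  have hT : Tendsto (fun t : ℝ => x + t • e) (𝓝[>] 0) (𝓝[Ω] x) := by
    refine tendsto_nhdsWithin_iff.2 ⟨?_, ?_⟩
    · have : Continuous (fun t : ℝ => x + t • e) := by fun_prop
      have h1 := this.tendsto 0
      simp only [zero_smul, add_zero] at h1
      exact h1.mono_left nhdsWithin_le_nhds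
    · filter_upwards [self_mem_nhdsWithin,
        (nhdsWithin_le_nhds (Iic_mem_nhds one_pos) : ∀ᶠ t in 𝓝[>] (0 : ℝ), t ≤ 1)] with t h1 h2
      exact he t h1 h2
  have hfr : ∃ᶠ y in 𝓝[Ω] x, ⟪v, e⟫ / ‖e‖ ≤ ⟪v, y - x⟫ / ‖y - x‖ := by
    refine hT.frequently (Eventually.frequently ?_)
    filter_upwards [self_mem_nhdsWithin] with t ht
    have ht : 0 < t := ht
    rw [add_sub_cancel_left, inner_smul_right, norm_smul, Real.norm_of_nonneg ht.le,
      mul_div_mul_left _ _ ht.ne']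
  have := le_limsup_of_frequently_le hfr ⟨‖v‖, by
    rw [eventually_map]
    exact Eventually.of_forall fun y => (abs_le.1 (quot_le_norm v (y - x))).2⟩
  have h3 : 0 < ⟪v, e⟫ / ‖e‖ := by positivity
  have h4 : limsup (fun y => ⟪v, y - x⟫ / ‖y - x‖) (𝓝[Ω] x) ≤ 0 := hv
  linarith

theorem pl2_fst (x y : E) : (pl2 x y).fst = x := rfl
theorem pl2_snd (x y : E) : (pl2 x y).snd = y := rfl

theorem wl_continuous_fst : Continuous (fun q : WithLp 2 (E × E) => q.fst) :=
  continuous_fst.comp (WithLp.prod_continuous_ofLp 2 E E)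

theorem wl_continuous_snd : Continuous (fun q : WithLp 2 (E × E) => q.snd) :=
  continuous_snd.comp (WithLp.prod_continuous_ofLp 2 E E)

theorem pl2_continuous : Continuous (fun q : E × E => pl2 q.1 q.2) :=
  WithLp.prod_continuous_toLp 2 E E

variable {κ ι : Type*} [Finite κ] [Nonempty κ] [Finite ι]
  {θ : E → EReal} {zb lam : E} {b : κ → E} {d : ι → E} {c0 : ℝ}

theorem sosd_orth (h : LocRep θ zb lam b d c0) (hlam : lam ∈ subdiff θ zb) {η : E}
    (hη : (sosd θ zb lam η).Nonempty) (μ : E) (h1 : lam + μ ∈ subdiff θ zb)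
    (h2 : lam - μ ∈ subdiff θ zb) : ⟪η, μ⟫ = 0 := by
  obtain ⟨w, xs, vs, hxs, hxlim, hvlim, hN⟩ := hη
  have hpos := h.pos hlam
  obtain ⟨δ, hδ, hsmall⟩ := poly_small b d
  have zlim : Tendsto (fun k => (xs k).fst) atTop (𝓝 zb) := (wl_continuous_fst.tendsto _).comp hxlim
  have llim : Tendsto (fun k => (xs k).snd) atTop (𝓝 lam) := (wl_continuous_snd.tendsto _).comp hxlim
  have vlim : Tendsto (fun k => (vs k).snd) atTop (𝓝 (-η)) := (wl_continuous_snd.tendsto _).comp hvlim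
  have lsmall : ∀ᶠ k in atTop, ‖(xs k).snd - lam‖ < δ := by
    filter_upwards [llim.eventually (ball_mem_nhds lam hδ)] with k hk
    exact mem_ball_iff_norm.1 hk
  have hμle := (h.sub_iff _).1 h1
  have hμle' := (h.sub_iff _).1 h2
  rw [add_sub_cancel_left] at hμle
  rw [show lam - μ - lam = -μ by abel] at hμle'
  have key : ∀ μ' : E, (∀ g ∈ Pc d, ⟪μ', g⟫ ≤ rho b g) → (∀ g ∈ Pc d, ⟪-μ', g⟫ ≤ rho b g) →
      ⟪-η, μ'⟫ ≤ 0 := by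
    intro μ' g1 g2
    have lim : Tendsto (fun k => ⟪(vs k).snd, lam + μ' - (xs k).snd⟫) atTop (𝓝 ⟪-η, μ'⟫) := by
      have := vlim.inner (𝕜 := ℝ) ((tendsto_const_nhds (x := lam + μ')).sub llim)
      simpa using this
    refine le_of_tendsto lim ?_
    filter_upwards [lsmall, zlim.eventually h.sub_near, zlim.eventually h.sub_of] with k k1 k2 k3
    have hxk : (xs k).snd ∈ subdiff θ (xs k).fst := hxs k
    obtain ⟨p1, p2, p3⟩ := k2 _ hxk
    have hr : rho b ((xs k).fst - zb) = 0 :=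
      le_antisymm (hsmall _ _ k1 p1 p3 p2) (hpos _ p1)
    have hμ0 : ⟪μ', (xs k).fst - zb⟫ = 0 := by
      have a1 := g1 _ p1
      have a2 := g2 _ p1
      rw [inner_neg_left] at a2
      linarith
    have := frechet_dir (e := pl2 0 (lam + μ' - (xs k).snd)) (hN k) (by
      intro t ht ht1
      show ((xs k) + t • pl2 (0 : E) (lam + μ' - (xs k).snd)).snd ∈
        subdiff θ ((xs k) + t • pl2 (0 : E) (lam + μ' - (xs k).snd)).fst
      rw [WithLp.add_fst, WithLp.add_snd, WithLp.smul_fst, WithLp.smul_snd, pl2_fst, pl2_snd,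
        smul_zero, add_zero]
      have e : (xs k).snd + t • (lam + μ' - (xs k).snd) - lam =
          (1 - t) • ((xs k).snd - lam) + t • μ' := by module
      refine k3 _ p1 ?_ ?_
      · rw [e, inner_add_left, inner_smul_left, inner_smul_left, p2, hr, hμ0]
        simp
      · intro g hg
        rw [e, inner_add_left, inner_smul_left, inner_smul_left]
        simp only [conj_trivial]
        have := p3 g hg
        have := g1 g hg
        nlinarith)
    rw [WithLp.prod_inner_apply] at this
    have e0 : (WithLp.ofLp (pl2 (0 : E) (lam + μ' - (xs k).snd))).1 = 0 := rfl
    rw [e0, inner_zero_right, zero_add] at this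
    exact this
  have k1 := key μ hμle hμle'
  have k2 := key (-μ) hμle' (by simpa using hμle)
  rw [inner_neg_left] at k1
  rw [inner_neg_neg] at k2
  linarith

theorem sosd_mem (h : LocRep θ zb lam b d c0) (hlam : lam ∈ subdiff θ zb)
    (hincl : ∀ z0, lam ∈ subdiff θ z0 → ∀ᶠ z in 𝓝 z0, subdiff θ z ⊆ subdiff θ z0)
    {h1 h2 : E} (p1 : h1 ∈ Pc d) (r1 : rho b h1 = 0) (p2 : h2 ∈ Pc d) (r2 : rho b h2 = 0) :
    (0 : E) ∈ sosd θ zb lam (h1 - h2) := by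
  have hpos := h.pos hlam
  have p0 : h1 + h2 ∈ Pc d := Pc_add d p1 p2
  have r0 : rho b (h1 + h2) = 0 := by
    have := rho_add_le b h1 h2
    exact le_antisymm (by linarith) (hpos _ p0)
  have hline : Tendsto (fun t : ℝ => zb + t • (h1 + h2)) (𝓝 0) (𝓝 zb) := by
    have : Continuous (fun t : ℝ => zb + t • (h1 + h2)) := by fun_prop
    have h1 := this.tendsto 0
    simpa using h1
  obtain ⟨δ, hδ, hb⟩ := Metric.eventually_nhds_iff_ball.1 (hline.eventually (h.sub_near.and h.sub_of))
  set ε : ℕ → ℝ := fun k => δ / 2 * (1 / ((k : ℝ) + 1)) with hε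
  have ε0 : ∀ k, 0 < ε k := fun k => by rw [hε]; positivity
  have εδ : ∀ k, ε k ∈ ball (0 : ℝ) δ := by
    intro k
    rw [mem_ball_zero_iff, Real.norm_of_nonneg (ε0 k).le]
    have : 1 / ((k : ℝ) + 1) ≤ 1 := by
      rw [div_le_one (by positivity)]
      have := Nat.cast_nonneg (α := ℝ) k
      linarith
    show δ / 2 * (1 / ((k : ℝ) + 1)) < δ
    nlinarith
  have εlim : Tendsto ε atTop (𝓝 0) := by
    have := (tendsto_one_div_add_atTop_nhds_zero_nat (𝕜 := ℝ)).const_mul (δ / 2)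
    rw [mul_zero] at this
    exact this
  have hmem : ∀ k, lam ∈ subdiff θ (zb + ε k • (h1 + h2)) := by
    intro k
    refine (hb _ (εδ k)).2 lam ?_ ?_ ?_
    · rw [add_sub_cancel_left]; exact Pc_smul d (ε0 k).le p0
    · rw [add_sub_cancel_left, rho_smul b _ (ε0 k).le, r0, sub_self]; simp
    · intro g hg
      rw [sub_self, inner_zero_left]
      exact hpos g hg
  refine ⟨fun k => pl2 (zb + ε k • (h1 + h2)) lam, fun _ => pl2 0 (-(h1 - h2)), hmem, ?_,
    tendsto_const_nhds, fun k => frechet_of_eventually (hmem k) ?_⟩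
  · have : Tendsto (fun k => (zb + ε k • (h1 + h2), lam)) atTop (𝓝 (zb, lam)) :=
      (hline.comp εlim).prodMk_nhds tendsto_const_nhds
    exact (pl2_continuous.tendsto (zb, lam)).comp this
  · have hev : ∀ᶠ q in 𝓝 (pl2 (zb + ε k • (h1 + h2)) lam),
        subdiff θ q.fst ⊆ subdiff θ (zb + ε k • (h1 + h2)) :=
      (wl_continuous_fst.tendsto (pl2 (zb + ε k • (h1 + h2)) lam)).eventually (hincl _ (hmem k))
    filter_upwards [nhdsWithin_le_nhds hev, self_mem_nhdsWithin] with q hq hqΩ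
    have hq1 : q.snd ∈ subdiff θ q.fst := hqΩ
    obtain ⟨-, a2, a3⟩ := (hb _ (εδ k)).1 _ (hq hq1)
    rw [add_sub_cancel_left, rho_smul b _ (ε0 k).le, r0, mul_zero, inner_smul_right,
      inner_add_right] at a2
    have a4 := a3 _ p1
    have a5 := a3 _ p2
    have a6 : ⟪q.snd - lam, h1⟫ + ⟪q.snd - lam, h2⟫ = 0 :=
      (mul_eq_zero.1 a2).resolve_left (ε0 k).ne'
    rw [WithLp.prod_inner_apply]
    have e0 : (WithLp.ofLp (pl2 (0 : E) (-(h1 - h2)))).1 = 0 := rfl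
    have e1 : (WithLp.ofLp (pl2 (0 : E) (-(h1 - h2)))).2 = -(h1 - h2) := rfl
    have e2 : (WithLp.ofLp (q - pl2 (zb + ε k • (h1 + h2)) lam)).2 = q.snd - lam := rfl
    rw [e0, e1, e2, inner_zero_left, zero_add, real_inner_comm, inner_neg_right, inner_sub_right]
    linarith

end Sosd


section Coords

theorem exists_right_inv {n m : ℕ} (A : Euc n →L[ℝ] Euc m) (S : Submodule ℝ (Euc m))
    (hinj : ∀ y ∈ S, ContinuousLinearMap.adjoint A y = 0 → y = 0) :
    ∃ R : Euc m →L[ℝ] Euc n, ∀ c ∈ S, ∀ y, ⟪c, A (R y)⟫ = ⟪c, y⟫ := by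
  set T : S →ₗ[ℝ] Euc n := (ContinuousLinearMap.adjoint A).toLinearMap ∘ₗ S.subtype with hT
  have hker : LinearMap.ker T = ⊥ := by
    rw [LinearMap.ker_eq_bot']
    intro y hy
    exact Subtype.ext (hinj y y.2 hy)
  obtain ⟨L, hL⟩ := LinearMap.exists_leftInverse_of_injective T hker
  refine ⟨ContinuousLinearMap.adjoint (LinearMap.toContinuousLinearMap (S.subtype ∘ₗ L)),
    fun c hc y => ?_⟩
  rw [← ContinuousLinearMap.adjoint_inner_left, ContinuousLinearMap.adjoint_inner_right]
  have h1 : L (T ⟨c, hc⟩) = ⟨c, hc⟩ := by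
    rw [← LinearMap.comp_apply, hL]; rfl
  have h2 : (LinearMap.toContinuousLinearMap (S.subtype ∘ₗ L)) (ContinuousLinearMap.adjoint A c) = c := by
    show ((L (T ⟨c, hc⟩) : S) : Euc m) = c
    rw [h1]
  rw [h2]

variable {n m : ℕ} {κ ι : Type*} [Fintype κ] [Nonempty κ] [Fintype ι]

theorem Pc_adj (A : Euc n →L[ℝ] Euc m) (d : ι → Euc m) (s : Euc n) :
    s ∈ Pc (fun j => ContinuousLinearMap.adjoint A (d j)) ↔ A s ∈ Pc d := by
  simp only [Pc, mem_setOf_eq, ContinuousLinearMap.adjoint_inner_left]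

theorem rho_adj (A : Euc n →L[ℝ] Euc m) (b : κ → Euc m) (s : Euc n) :
    rho (fun j => ContinuousLinearMap.adjoint A (b j)) s = rho b (A s) := by
  simp only [rho, ContinuousLinearMap.adjoint_inner_left]

/-- The zero set of the polyhedral function is a convex cone, so its span is a difference set. -/
theorem span_zero_set {E : Type*} [NormedAddCommGroup E] [InnerProductSpace ℝ E]
    (b : κ → E) (d : ι → E) (hpos : ∀ s ∈ Pc d, 0 ≤ rho b s) {u : E}
    (hu : u ∈ Submodule.span ℝ {s | s ∈ Pc d ∧ rho b s = 0}) :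
    ∃ s1 s2, (s1 ∈ Pc d ∧ rho b s1 = 0) ∧ (s2 ∈ Pc d ∧ rho b s2 = 0) ∧ u = s1 - s2 := by
  have hadd : ∀ s s', (s ∈ Pc d ∧ rho b s = 0) → (s' ∈ Pc d ∧ rho b s' = 0) →
      (s + s' ∈ Pc d ∧ rho b (s + s') = 0) := by
    intro s s' hs hs'
    have h1 := Pc_add d hs.1 hs'.1
    have h2 := rho_add_le b s s'
    exact ⟨h1, le_antisymm (by linarith [hs.2, hs'.2]) (hpos _ h1)⟩
  have hsm : ∀ s, (s ∈ Pc d ∧ rho b s = 0) → ∀ t : ℝ, 0 ≤ t →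
      (t • s ∈ Pc d ∧ rho b (t • s) = 0) := by
    intro s hs t ht
    exact ⟨Pc_smul d ht hs.1, by rw [rho_smul b s ht, hs.2, mul_zero]⟩
  have h0 : (0 : E) ∈ Pc d ∧ rho b 0 = 0 := ⟨Pc_zero d, rho_zero b⟩
  induction hu using Submodule.span_induction with
  | mem x hx => exact ⟨x, 0, hx, h0, by simp⟩
  | zero => exact ⟨0, 0, h0, h0, by simp⟩
  | add x y _ _ hx hy =>
    obtain ⟨s1, s2, h1, h2, rfl⟩ := hx
    obtain ⟨t1, t2, g1, g2, rfl⟩ := hy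
    exact ⟨s1 + t1, s2 + t2, hadd _ _ h1 g1, hadd _ _ h2 g2, by abel⟩
  | smul c x _ hx =>
    obtain ⟨s1, s2, h1, h2, rfl⟩ := hx
    rcases le_total 0 c with hc | hc
    · exact ⟨c • s1, c • s2, hsm _ h1 c hc, hsm _ h2 c hc, smul_sub _ _ _⟩
    · refine ⟨(-c) • s2, (-c) • s1, hsm _ h2 _ (by linarith), hsm _ h1 _ (by linarith), ?_⟩
      module

variable {θ : Euc m → EReal} {zb lam : Euc m} {b : κ → Euc m} {d : ι → Euc m} {c0 : ℝ}

theorem dom_sosd (h : LocRep θ zb lam b d c0) (hlam : lam ∈ subdiff θ zb) (A : Euc n →L[ℝ] Euc m)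
    (hinj : ∀ y ∈ Spar θ zb, ContinuousLinearMap.adjoint A y = 0 → y = 0) {u : Euc n}
    (hu : (sosd θ zb lam (A u)).Nonempty) :
    u ∈ Submodule.span ℝ {s | s ∈ Pc (fun j => ContinuousLinearMap.adjoint A (d j)) ∧
      rho (fun j => ContinuousLinearMap.adjoint A (b j)) s = 0} := by
  set Y := {s | s ∈ Pc (fun j => ContinuousLinearMap.adjoint A (d j)) ∧
      rho (fun j => ContinuousLinearMap.adjoint A (b j)) s = 0} with hY
  have hpos := h.pos hlam
  have hpos' : ∀ s ∈ Pc (fun j => ContinuousLinearMap.adjoint A (d j)),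
      0 ≤ rho (fun j => ContinuousLinearMap.adjoint A (b j)) s := by
    intro s hs
    rw [rho_adj]
    exact hpos _ ((Pc_adj A d s).1 hs)
  rw [← Submodule.orthogonal_orthogonal (Submodule.span ℝ Y), Submodule.mem_orthogonal]
  intro ν hν
  have hν0 : ∀ s ∈ Y, ⟪ν, s⟫ = 0 := fun s hs =>
    Submodule.inner_left_of_mem_orthogonal (Submodule.subset_span hs) hν
  obtain ⟨t1, e1, ht1, he1, hν1⟩ := poly_farkas (fun j => ContinuousLinearMap.adjoint A (b j))
    (fun j => ContinuousLinearMap.adjoint A (d j)) ν (fun s hs hr => (hν0 s ⟨hs, le_antisymm hr (hpos' s hs)⟩).le)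
  obtain ⟨t2, e2, ht2, he2, hν2⟩ := poly_farkas (fun j => ContinuousLinearMap.adjoint A (b j))
    (fun j => ContinuousLinearMap.adjoint A (d j)) (-ν) (fun s hs hr => by
      rw [inner_neg_left, hν0 s ⟨hs, le_antisymm hr (hpos' s hs)⟩, neg_zero])
  obtain ⟨τ1, hτ1, hl1⟩ := poly_comb_le b d hpos t1 e1 ht1 he1
  obtain ⟨τ2, hτ2, hl2⟩ := poly_comb_le b d hpos t2 e2 ht2 he2
  set μ1 := ∑ i, t1 i • b i + ∑ j, e1 j • d j with hμ1
  set μ2 := ∑ i, t2 i • b i + ∑ j, e2 j • d j with hμ2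
  have m1 : μ1 ∈ Spar θ zb := Submodule.add_mem _
    (Submodule.sum_mem _ fun i _ => Submodule.smul_mem _ _ (h.b_mem hlam i))
    (Submodule.sum_mem _ fun i _ => Submodule.smul_mem _ _ (h.d_mem hlam i))
  have m2 : μ2 ∈ Spar θ zb := Submodule.add_mem _
    (Submodule.sum_mem _ fun i _ => Submodule.smul_mem _ _ (h.b_mem hlam i))
    (Submodule.sum_mem _ fun i _ => Submodule.smul_mem _ _ (h.d_mem hlam i))
  have a1 : ContinuousLinearMap.adjoint A μ1 = ν := by
    rw [hν1, hμ1]; simp [map_add, map_sum]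
  have a2 : ContinuousLinearMap.adjoint A μ2 = -ν := by
    rw [hν2, hμ2]; simp [map_add, map_sum]
  have hneg : μ2 = -μ1 := by
    have := hinj (μ1 + μ2) (Submodule.add_mem _ m1 m2) (by rw [map_add, a1, a2, add_neg_cancel])
    exact eq_neg_of_add_eq_zero_right this
  rw [hneg] at hl2
  set τ := min τ1 τ2 with hτ
  have hτ0 : 0 < τ := lt_min hτ1 hτ2
  have scale : ∀ (μ : Euc m) (τ' : ℝ), τ ≤ τ' → (∀ s ∈ Pc d, ⟪τ' • μ, s⟫ ≤ rho b s) →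
      ∀ s ∈ Pc d, ⟪τ • μ, s⟫ ≤ rho b s := by
    intro μ τ' hle hh s hs
    have g1 := hh s hs
    have g2 := hpos s hs
    rw [inner_smul_left] at g1 ⊢
    simp only [conj_trivial] at g1 ⊢
    rcases le_total 0 ⟪μ, s⟫ with hc | hc <;> nlinarith
  have k1 := scale μ1 τ1 (min_le_left _ _) hl1
  have k2 := scale (-μ1) τ2 (min_le_right _ _) hl2
  have := sosd_orth h hlam hu (τ • μ1)
    ((h.sub_iff _).2 (by rw [add_sub_cancel_left]; exact k1))
    ((h.sub_iff _).2 (by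
      have e : lam - τ • μ1 - lam = τ • -μ1 := by module
      rw [e]; exact k2))
  rw [inner_smul_right] at this
  have h0 : ⟪A u, μ1⟫ = 0 := (mul_eq_zero.1 this).resolve_left hτ0.ne'
  rw [← a1, ContinuousLinearMap.adjoint_inner_left, real_inner_comm]
  exact h0

end Coords


section SSpace

variable {E P : Type*} [NormedAddCommGroup E] [InnerProductSpace ℝ E] [FiniteDimensional ℝ E]
  [NormedAddCommGroup P] [NormedSpace ℝ P]

/-- Partial derivative in the first variable. -/
def Gam (g : E × P → ℝ) (q : E × P) : E →L[ℝ] ℝ :=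
  (fderiv ℝ g q).comp (ContinuousLinearMap.inl ℝ E P)

theorem Gam_contDiffAt {g : E × P → ℝ} {q : E × P} (hg : ContDiffAt ℝ 2 g q) :
    ContDiffAt ℝ 1 (Gam g) q :=
  (hg.fderiv_right (m := 1) (by norm_num)).clm_comp contDiffAt_const

theorem Gam_line {g : E × P → ℝ} {s e : E} {π : P} (hg : DifferentiableAt ℝ g (s, π)) :
    HasDerivAt (fun t : ℝ => g (s + t • e, π)) (Gam g (s, π) e) 0 := by
  have h1 : HasDerivAt (fun t : ℝ => (s + t • e, π)) (e, (0 : P)) 0 := by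
    refine HasDerivAt.prodMk ?_ (hasDerivAt_const _ _)
    simpa using ((hasDerivAt_id (0 : ℝ)).smul_const e).const_add s
  have h2 : HasFDerivAt g (fderiv ℝ g (s, π)) ((fun t : ℝ => (s + t • e, π)) 0) := by
    simpa using hg.hasFDerivAt
  exact h2.comp_hasDerivAt (0 : ℝ) h1

variable {κ ι : Type*} [Fintype κ] [Nonempty κ] [Fintype ι] (b : κ → E) (d : ι → E)

theorem dir_ineq {g : E × P → ℝ} {s e : E} {π : P} {R : ℝ} (hg : DifferentiableAt ℝ g (s, π))
    (h : ∀ᶠ t in 𝓝[>] (0 : ℝ), g (s, π) ≤ g (s + t • e, π) + t * R) :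
    0 ≤ Gam g (s, π) e + R := by
  have h1 := (Gam_line (e := e) hg).tendsto_slope_zero_right
  simp only [zero_add, zero_smul, add_zero] at h1
  refine ge_of_tendsto (h1.add_const R) ?_
  filter_upwards [h, self_mem_nhdsWithin] with t ht ht0
  have ht0 : 0 < t := ht0
  have : t⁻¹ * (t * R) = R := by field_simp
  rw [smul_eq_mul, ← this, ← mul_add]
  have : 0 ≤ g (s + t • e, π) - g (s, π) + t * R := by linarith
  positivity

/-- Variational inequality at local minimizers. -/
theorem vi_of_locmin {g : E × P → ℝ} {s : E} {π : P} (hg : DifferentiableAt ℝ g (s, π))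
    (hs : s ∈ Pc d) (hmin : ∀ᶠ s' in 𝓝 s, s' ∈ Pc d → g (s, π) + rho b s ≤ g (s', π) + rho b s') :
    (∀ s' ∈ Pc d, 0 ≤ Gam g (s, π) s' + rho b s') ∧ Gam g (s, π) s + rho b s = 0 := by
  have hT : ∀ e : E, Tendsto (fun t : ℝ => s + t • e) (𝓝[>] 0) (𝓝 s) := by
    intro e
    have : Continuous (fun t : ℝ => s + t • e) := by fun_prop
    have h1 := this.tendsto 0
    simp only [zero_smul, add_zero] at h1
    exact h1.mono_left nhdsWithin_le_nhds
  have h1 : ∀ s' ∈ Pc d, 0 ≤ Gam g (s, π) s' + rho b s' := by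
    intro s' hs'
    refine dir_ineq hg ?_
    filter_upwards [(hT s').eventually hmin, self_mem_nhdsWithin] with t ht ht0
    have ht0 : 0 < t := ht0
    have a1 := ht (Pc_add d hs (Pc_smul d ht0.le hs'))
    have a2 := rho_add_le b s (t • s')
    rw [rho_smul b s' ht0.le] at a2
    linarith
  refine ⟨h1, le_antisymm ?_ (h1 s hs)⟩
  have h2 : 0 ≤ Gam g (s, π) (-s) + -rho b s := by
    refine dir_ineq hg ?_
    filter_upwards [(hT (-s)).eventually hmin, self_mem_nhdsWithin,
      (nhdsWithin_le_nhds (Iio_mem_nhds one_pos) : ∀ᶠ t in 𝓝[>] (0 : ℝ), t < 1)] with t ht ht0 ht1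
    have ht0 : 0 < t := ht0
    have e : s + t • -s = (1 - t) • s := by module
    rw [e] at ht ⊢
    have a1 := ht (Pc_smul d (by linarith) hs)
    rw [rho_smul b s (by linarith)] at a1
    linarith
  rw [map_neg] at h2
  linarith




theorem vi_small (hpos : ∀ s ∈ Pc d, 0 ≤ rho b s) : ∃ δ > (0 : ℝ), ∀ (g : E × P → ℝ) (s : E) (π : P), ‖Gam g (s, π)‖ < δ →
    s ∈ Pc d → (∀ s' ∈ Pc d, 0 ≤ Gam g (s, π) s' + rho b s') → Gam g (s, π) s + rho b s = 0 →
    rho b s = 0 := by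
  obtain ⟨δ, hδ, h⟩ := poly_small b d
  refine ⟨δ, hδ, fun g s π hn hs h1 h2 => le_antisymm ?_ (hpos s hs)⟩
  have hr : ∀ y, ⟪-((InnerProductSpace.toDual ℝ E).symm (Gam g (s, π))), y⟫ = -(Gam g (s, π) y) := by
    intro y
    rw [inner_neg_left, InnerProductSpace.toDual_symm_apply]
  refine h (-((InnerProductSpace.toDual ℝ E).symm (Gam g (s, π)))) s ?_ hs ?_ ?_
  · rw [norm_neg, LinearIsometryEquiv.norm_map]; exact hn
  · intro y hy
    rw [hr]
    linarith [h1 y hy]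
  · rw [hr]; linarith

end SSpace


section SSpace2

variable {E P : Type*} [NormedAddCommGroup E] [InnerProductSpace ℝ E] [FiniteDimensional ℝ E]
  [NormedAddCommGroup P] [NormedSpace ℝ P]

theorem sphere_lower {C : Set E} (hC : IsClosed C) {ψ : E → ℝ} (hψ : Continuous ψ)
    (hp : ∀ u ∈ C, ‖u‖ = 1 → 0 < ψ u) : ∃ c > (0 : ℝ), ∀ u ∈ C, ‖u‖ = 1 → c ≤ ψ u := by
  have := FiniteDimensional.proper ℝ E
  have hK : IsCompact (C ∩ sphere (0 : E) 1) := (isCompact_sphere 0 1).inter_left hC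
  rcases (C ∩ sphere (0 : E) 1).eq_empty_or_nonempty with he | hne
  · refine ⟨1, one_pos, fun u hu h1 => ?_⟩
    have : u ∈ C ∩ sphere (0 : E) 1 := ⟨hu, mem_sphere_zero_iff_norm.2 h1⟩
    rw [he] at this
    exact absurd this (notMem_empty u)
  · obtain ⟨u0, hu0, hmin⟩ := hK.exists_isMinOn hne hψ.continuousOn
    exact ⟨ψ u0, hp u0 hu0.1 (mem_sphere_zero_iff_norm.1 hu0.2), fun u hu h1 =>
      hmin ⟨hu, mem_sphere_zero_iff_norm.2 h1⟩⟩

theorem quad_continuous (T : E × P →L[ℝ] E →L[ℝ] ℝ) : Continuous (fun u : E => T (u, 0) u) := by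
  fun_prop

theorem quad_coercive (T : E × P →L[ℝ] E →L[ℝ] ℝ) (S : Submodule ℝ E)
    (hp : ∀ u ∈ S, u ≠ 0 → 0 < T (u, 0) u) : ∃ c > (0 : ℝ), ∀ u ∈ S, c * ‖u‖ ^ 2 ≤ T (u, 0) u := by
  obtain ⟨c, hc, h⟩ := sphere_lower S.closed_of_finiteDimensional (quad_continuous T) (by
    intro u hu h1
    refine hp u hu ?_
    rintro rfl
    simp at h1)
  refine ⟨c, hc, fun u hu => ?_⟩
  rcases eq_or_ne u 0 with rfl | h0
  · have : ((0 : E), (0 : P)) = 0 := rfl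
    simp
  · have hn : 0 < ‖u‖ := norm_pos_iff.2 h0
    have := h (‖u‖⁻¹ • u) (S.smul_mem _ hu) (by
      rw [norm_smul, norm_inv, norm_norm, inv_mul_cancel₀ hn.ne'])
    have e : ((‖u‖⁻¹ • u, 0) : E × P) = ‖u‖⁻¹ • (u, 0) := by simp
    rw [e, map_smul, map_smul, ContinuousLinearMap.smul_apply, smul_eq_mul, smul_eq_mul,
      ← mul_assoc, ← mul_inv, ← sq, ← div_eq_inv_mul, le_div_iff₀ (by positivity)] at this
    exact this

variable {κ ι : Type*} [Fintype κ] [Nonempty κ] [Fintype ι] (b : κ → E) (d : ι → E)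

theorem s_strict_min (hpos : ∀ s ∈ Pc d, 0 ≤ rho b s) {g : E × P → ℝ} {π : P}
    (hg : ContDiffAt ℝ 2 g (0, π)) (hG0 : Gam g (0, π) = 0)
    (hq : ∀ u ∈ Pc d, rho b u = 0 → u ≠ 0 → 0 < fderiv ℝ (Gam g) (0, π) (u, 0) u) :
    ∃ δ > (0 : ℝ), ∀ s ∈ Pc d, s ≠ 0 → ‖s‖ < δ → g (0, π) < g (s, π) + rho b s := by
  set T := fderiv ℝ (Gam g) (0, π) with hT
  obtain ⟨m, hm, hmin⟩ := sphere_lower (Pc_isClosed d)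
    ((rho_continuous b).max (quad_continuous T)) (by
      intro u hu h1
      rcases (hpos u hu).lt_or_eq with h | h
      · exact lt_max_of_lt_left h
      · refine lt_max_of_lt_right (hq u hu h.symm ?_)
        rintro rfl
        simp at h1)
  have hd : HasFDerivAt (Gam g) T (0, π) :=
    ((Gam_contDiffAt hg).differentiableAt (by norm_num)).hasFDerivAt
  have hsm : ∀ᶠ q in 𝓝 ((0 : E), π), ‖Gam g q - Gam g (0, π) - T (q - (0, π))‖ ≤ m / 2 * ‖q - (0, π)‖ :=
    hd.isLittleO.def (by positivity)
  have hdiff : ∀ᶠ q in 𝓝 ((0 : E), π), DifferentiableAt ℝ g q := by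
    filter_upwards [hg.eventually (by simp)] with q hq
    exact hq.differentiableAt (by norm_num)
  obtain ⟨δ, hδ, hb⟩ := Metric.eventually_nhds_iff_ball.1 (hsm.and hdiff)
  set M := ‖T‖ + m / 2 with hM
  have hM0 : 0 < M := by positivity
  refine ⟨min δ (m / M), lt_min hδ (by positivity), fun s hs hs0 hsn => ?_⟩
  by_contra hc
  push Not at hc
  have hn : 0 < ‖s‖ := norm_pos_iff.2 hs0
  have hin : ∀ t : ℝ, t ∈ Icc (0 : ℝ) 1 → (t • s, π) ∈ ball ((0 : E), π) δ := by
    intro t ht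
    rw [mem_ball, Prod.dist_eq, dist_self, dist_zero_right, norm_smul, Real.norm_of_nonneg ht.1]
    refine max_lt ?_ hδ
    have := hsn.trans_le (min_le_left _ _)
    nlinarith [ht.1, ht.2]
  have hder : ∀ t ∈ Icc (0 : ℝ) 1, HasDerivAt (fun t : ℝ => g (t • s, π)) (Gam g (t • s, π) s) t := by
    intro t ht
    have h1 := Gam_line (e := s) (hb _ (hin t ht)).2
    have h2 : HasDerivAt (fun r : ℝ => r - t) 1 t := (hasDerivAt_id t).sub_const t
    have h3 : HasDerivAt (fun r : ℝ => g (t • s + r • s, π)) (Gam g (t • s, π) s)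
        ((fun r : ℝ => r - t) t) := by
      simp only [sub_self]; exact h1
    have h4 := HasDerivAt.scomp (h := fun r : ℝ => r - t) t h3 h2
    simp only [one_smul] at h4
    have e : (fun r : ℝ => g (r • s, π)) = (fun r : ℝ => g (t • s + r • s, π)) ∘ fun r : ℝ => r - t := by
      ext r
      simp only [Function.comp]
      rw [← add_smul, add_sub_cancel]
    rw [e]
    exact h4
  obtain ⟨t, ht, hteq⟩ := exists_hasDerivAt_eq_slope (fun t : ℝ => g (t • s, π))
    (fun t => Gam g (t • s, π) s) zero_lt_one
    (fun t ht => (hder t ht).continuousAt.continuousWithinAt)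
    (fun t ht => hder t ⟨ht.1.le, ht.2.le⟩)
  simp only [one_smul, zero_smul, sub_zero, div_one] at hteq
  have ht' : t ∈ Icc (0 : ℝ) 1 := ⟨ht.1.le, ht.2.le⟩
  have h5 := (hb _ (hin t ht')).1
  have e1 : (t • s, π) - ((0 : E), π) = t • (s, (0 : P)) := by simp
  have e2 : ‖((s, 0) : E × P)‖ = ‖s‖ := by simp [Prod.norm_def]
  rw [e1, hG0, sub_zero, map_smul, norm_smul, Real.norm_of_nonneg ht'.1, e2] at h5
  have h6 : |Gam g (t • s, π) s - t * T (s, 0) s| ≤ m / 2 * (t * ‖s‖) * ‖s‖ := by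
    have := (Gam g (t • s, π) - t • T (s, 0)).le_opNorm s
    rw [ContinuousLinearMap.sub_apply, ContinuousLinearMap.smul_apply, smul_eq_mul, Real.norm_eq_abs] at this
    exact this.trans (mul_le_mul_of_nonneg_right h5 hn.le)
  have h7 := abs_le.1 h6
  have hTs : |T (s, 0) s| ≤ ‖T‖ * ‖s‖ * ‖s‖ := by
    have a1 := (T (s, 0)).le_opNorm s
    have a2 := T.le_opNorm (s, (0 : P))
    rw [e2] at a2
    rw [Real.norm_eq_abs] at a1
    exact a1.trans (mul_le_mul_of_nonneg_right a2 hn.le)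
  have hTs' := abs_le.1 hTs
  -- normalized direction
  have hu := hmin (‖s‖⁻¹ • s) (Pc_smul d (by positivity) hs) (by
      rw [norm_smul, norm_inv, norm_norm, inv_mul_cancel₀ hn.ne'])
  have e : ((‖s‖⁻¹ • s, 0) : E × P) = ‖s‖⁻¹ • (s, 0) := by simp
  rw [e, map_smul, map_smul, ContinuousLinearMap.smul_apply, smul_eq_mul, smul_eq_mul,
    rho_smul b s (by positivity)] at hu
  have hr0 := hpos s hs
  have hs2 : 0 < ‖s‖ * ‖s‖ := by positivity
  rcases le_max_iff.1 hu with h | h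
  · rw [← div_eq_inv_mul, le_div_iff₀ hn] at h
    have hlt : ‖s‖ * M < m := by
      have := hsn.trans_le (min_le_right _ _)
      rwa [lt_div_iff₀ hM0] at this
    have hA : t * (‖T‖ * ‖s‖ * ‖s‖) ≤ ‖T‖ * ‖s‖ * ‖s‖ := by
      have : 0 ≤ ‖T‖ * ‖s‖ * ‖s‖ := by positivity
      nlinarith [ht'.2]
    have hB : m / 2 * (t * ‖s‖) * ‖s‖ ≤ m / 2 * (‖s‖ * ‖s‖) := by
      have : 0 ≤ m / 2 * (‖s‖ * ‖s‖) := by positivity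
      nlinarith [ht'.2]
    have hC : -(t * (‖T‖ * ‖s‖ * ‖s‖)) ≤ t * T (s, 0) s := by
      have := mul_le_mul_of_nonneg_left hTs'.1 ht'.1
      linarith
    have hD : rho b s ≤ ‖s‖ * M * ‖s‖ := by
      rw [hM]
      nlinarith [h7.1]
    have := mul_lt_mul_of_pos_right hlt hn
    linarith
  · rw [← mul_assoc, ← mul_inv, ← div_eq_inv_mul, le_div_iff₀ hs2] at h
    have hA : t * (m * (‖s‖ * ‖s‖)) ≤ t * T (s, 0) s := mul_le_mul_of_nonneg_left h ht'.1
    have hB : 0 < t * (m * (‖s‖ * ‖s‖)) := mul_pos ht.1 (by positivity)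
    have : m / 2 * (t * ‖s‖) * ‖s‖ = t * (m * (‖s‖ * ‖s‖)) / 2 := by ring
    linarith [h7.1]

theorem s_estimate (hpos : ∀ s ∈ Pc d, 0 ≤ rho b s) {g : E × P → ℝ} {π : P}
    (hg : ContDiffAt ℝ 2 g (0, π)) (hG0 : Gam g (0, π) = 0)
    (hq : ∀ u ∈ Submodule.span ℝ {s | s ∈ Pc d ∧ rho b s = 0}, u ≠ 0 →
      0 < fderiv ℝ (Gam g) (0, π) (u, 0) u) :
    ∃ δ > (0 : ℝ), ∃ C ≥ (0 : ℝ),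
      (∀ s π1, ‖s‖ < δ → ‖π1 - π‖ < δ → s ∈ Pc d →
        (∀ᶠ s' in 𝓝 s, s' ∈ Pc d → g (s, π1) + rho b s ≤ g (s', π1) + rho b s') → rho b s = 0) ∧
      ∀ s1 π1 s2 π2, ‖s1‖ < δ → ‖π1 - π‖ < δ → s1 ∈ Pc d →
        (∀ᶠ s' in 𝓝 s1, s' ∈ Pc d → g (s1, π1) + rho b s1 ≤ g (s', π1) + rho b s') →
        ‖s2‖ < δ → ‖π2 - π‖ < δ → s2 ∈ Pc d →
        (∀ᶠ s' in 𝓝 s2, s' ∈ Pc d → g (s2, π2) + rho b s2 ≤ g (s', π2) + rho b s') →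
        ‖s1 - s2‖ ≤ C * ‖π1 - π2‖ := by
  set T := fderiv ℝ (Gam g) (0, π) with hT
  obtain ⟨c, hc, hco⟩ := quad_coercive T _ hq
  have hd : HasStrictFDerivAt (Gam g) T (0, π) :=
    (Gam_contDiffAt hg).hasStrictFDerivAt (by norm_num)
  have hst : ∀ᶠ q in 𝓝 (((0 : E), π), ((0 : E), π)),
      ‖Gam g q.1 - Gam g q.2 - T (q.1 - q.2)‖ ≤ c / 2 * ‖q.1 - q.2‖ :=
    hd.isLittleO.def (by positivity)
  have hdiff : ∀ᶠ q in 𝓝 ((0 : E), π), DifferentiableAt ℝ g q := by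
    filter_upwards [hg.eventually (by simp)] with q hq
    exact hq.differentiableAt (by norm_num)
  obtain ⟨δ0, hδ0, hvis⟩ := vi_small (P := P) b d hpos
  have hsmall : ∀ᶠ q in 𝓝 ((0 : E), π), ‖Gam g q‖ < δ0 := by
    have h1 : ContinuousAt (fun q => ‖Gam g q‖) ((0 : E), π) :=
      (Gam_contDiffAt hg).continuousAt.norm
    refine h1.eventually_lt continuousAt_const ?_
    rw [hG0, norm_zero]; exact hδ0
  obtain ⟨δ1, hδ1, hb1⟩ := Metric.eventually_nhds_iff_ball.1 (hdiff.and hsmall)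
  obtain ⟨δ2, hδ2, hb2⟩ := Metric.eventually_nhds_iff_ball.1 hst
  have hin : ∀ s π1, ‖s‖ < min δ1 δ2 → ‖π1 - π‖ < min δ1 δ2 → (s, π1) ∈ ball ((0 : E), π) (min δ1 δ2) := by
    intro s π1 h1 h2
    rw [mem_ball, Prod.dist_eq, dist_zero_right, dist_eq_norm]
    exact max_lt h1 h2
  have hY : ∀ s π1, ‖s‖ < min δ1 δ2 → ‖π1 - π‖ < min δ1 δ2 → s ∈ Pc d →
        (∀ᶠ s' in 𝓝 s, s' ∈ Pc d → g (s, π1) + rho b s ≤ g (s', π1) + rho b s') →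
        rho b s = 0 ∧ (∀ s' ∈ Pc d, 0 ≤ Gam g (s, π1) s' + rho b s') ∧ Gam g (s, π1) s = 0 := by
    intro s π1 h1 h2 hs hmin
    have hb := hb1 _ (ball_subset_ball (min_le_left _ _) (hin s π1 h1 h2))
    obtain ⟨v1, v2⟩ := vi_of_locmin b d hb.1 hs hmin
    have hr := hvis g s π1 hb.2 hs v1 v2
    exact ⟨hr, v1, by linarith⟩
  refine ⟨min δ1 δ2, lt_min hδ1 hδ2, (‖T‖ + c / 2) / (c / 2), by positivity,
    fun s π1 h1 h2 hs hmin => (hY s π1 h1 h2 hs hmin).1, ?_⟩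
  intro s1 π1 s2 π2 a1 a2 a3 a4 b1 b2 b3 b4
  obtain ⟨r1, v1, w1⟩ := hY s1 π1 a1 a2 a3 a4
  obtain ⟨r2, v2, w2⟩ := hY s2 π2 b1 b2 b3 b4
  set u := s1 - s2 with hu
  have hmono : (Gam g (s1, π1) - Gam g (s2, π2)) u ≤ 0 := by
    have := v1 s2 b3
    have := v2 s1 a3
    rw [hu, ContinuousLinearMap.sub_apply, map_sub, map_sub]
    linarith
  have hspan : u ∈ Submodule.span ℝ {s | s ∈ Pc d ∧ rho b s = 0} :=
    Submodule.sub_mem _ (Submodule.subset_span ⟨a3, r1⟩) (Submodule.subset_span ⟨b3, r2⟩)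
  have hcu := hco u hspan
  have hball : (((s1, π1), (s2, π2)) : (E × P) × (E × P)) ∈ ball (((0 : E), π), ((0 : E), π)) δ2 := by
    rw [mem_ball, Prod.dist_eq]
    exact max_lt (ball_subset_ball (min_le_right _ _) (hin s1 π1 a1 a2))
      (ball_subset_ball (min_le_right _ _) (hin s2 π2 b1 b2))
  have hs := hb2 _ hball
  set ω := π1 - π2 with hω
  have e0 : (s1, π1) - (s2, π2) = (u, ω) := rfl
  have e1 : ((u, ω) : E × P) = (u, 0) + (0, ω) := by simp
  simp only at hs
  rw [e0] at hs
  have hnorm : ‖((u, ω) : E × P)‖ ≤ ‖u‖ + ‖ω‖ := by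
    rw [Prod.norm_def]
    exact max_le (by linarith [norm_nonneg ω]) (by linarith [norm_nonneg u])
  have hs' : |(Gam g (s1, π1) - Gam g (s2, π2)) u - T (u, ω) u| ≤ c / 2 * (‖u‖ + ‖ω‖) * ‖u‖ := by
    have := (Gam g (s1, π1) - Gam g (s2, π2) - T (u, ω)).le_opNorm u
    rw [ContinuousLinearMap.sub_apply, Real.norm_eq_abs] at this
    refine this.trans (mul_le_mul_of_nonneg_right (hs.trans ?_) (norm_nonneg _))
    exact mul_le_mul_of_nonneg_left hnorm (by positivity)
  have hTω : |T (0, ω) u| ≤ ‖T‖ * ‖ω‖ * ‖u‖ := by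
    have a1 := (T (0, ω)).le_opNorm u
    have a2 := T.le_opNorm ((0 : E), ω)
    have e2 : ‖((0, ω) : E × P)‖ = ‖ω‖ := by simp [Prod.norm_def]
    rw [e2] at a2
    rw [Real.norm_eq_abs] at a1
    exact a1.trans (mul_le_mul_of_nonneg_right a2 (norm_nonneg _))
  rw [e1, map_add, ContinuousLinearMap.add_apply] at hs'
  have k1 := (abs_le.1 hs').1
  have k2 := (abs_le.1 hTω).1
  rw [div_mul_eq_mul_div, le_div_iff₀ (by positivity)]
  rcases eq_or_ne u 0 with h0 | h0
  · rw [h0, norm_zero, zero_mul]; positivity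
  · have hn : 0 < ‖u‖ := norm_pos_iff.2 h0
    have : ‖u‖ * (‖u‖ * (c / 2)) ≤ ‖u‖ * ((‖T‖ + c / 2) * ‖ω‖) := by nlinarith
    exact le_of_mul_le_mul_left this hn

end SSpace2


section CoordInv

theorem inner_hess_eq {E : Type*} [NormedAddCommGroup E] [InnerProductSpace ℝ E] [CompleteSpace E]
    {f : E → ℝ} {x : E} (hf : ContDiffAt ℝ 2 f x) (a c : E) :
    ⟪fderiv ℝ (gradient f) x a, c⟫ = fderiv ℝ (fderiv ℝ f) x a c := by
  have h1 : DifferentiableAt ℝ (gradient f) x := (contDiffAt_gradient hf).differentiableAt (by norm_num)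
  have h2 : fderiv ℝ f = fun y => (InnerProductSpace.toDual ℝ E).toContinuousLinearEquiv (gradient f y) := by
    ext1 y
    exact toDual_gradient.symm
  rw [h2]
  have h3 := ((InnerProductSpace.toDual ℝ E).toContinuousLinearEquiv.hasFDerivAt.comp x h1.hasFDerivAt).fderiv
  simp only [Function.comp_def] at h3
  rw [h3]
  rfl

variable {n dd : ℕ}

theorem coord_inverse {F : Euc n × Euc dd → Euc n} {xb : Euc n} {wb : Euc dd}
    (hF : ContDiffAt ℝ 2 F (xb, wb)) (hF0 : F (xb, wb) = 0)
    (hF' : HasFDerivAt (fun x => F (x, wb)) (ContinuousLinearMap.id ℝ (Euc n)) xb) :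
    ∃ ξ : Euc n × Euc dd → Euc n, ContDiffAt ℝ 2 ξ (0, wb) ∧ ξ (0, wb) = xb ∧
      (∀ᶠ p in 𝓝 ((0 : Euc n), wb), F (ξ p, p.2) = p.1) ∧
      (∀ᶠ q in 𝓝 (xb, wb), ξ (F q, q.2) = q.1) := by
  set D := fderiv ℝ F (xb, wb) with hD
  have hFd : HasFDerivAt F D (xb, wb) := (hF.differentiableAt (by norm_num)).hasFDerivAt
  have hDu : ∀ u : Euc n, D (u, 0) = u := by
    intro u
    have h1 : HasFDerivAt (fun x : Euc n => (x, wb)) (ContinuousLinearMap.inl ℝ (Euc n) (Euc dd)) xb :=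
      hasFDerivAt_prodMk_left xb wb
    have h2 := hFd.comp xb h1
    have h3 := h2.unique hF'
    have := congrArg (fun L : Euc n →L[ℝ] Euc n => L u) h3
    simpa using this
  set B : Euc dd →L[ℝ] Euc n := D.comp (ContinuousLinearMap.inr ℝ (Euc n) (Euc dd)) with hB
  have hDs : ∀ q : Euc n × Euc dd, D q = q.1 + B q.2 := by
    intro q
    have : q = (q.1, 0) + (0, q.2) := by simp
    conv_lhs => rw [this]
    rw [map_add, hDu]
    rfl
  let G' : (Euc n × Euc dd) ≃L[ℝ] (Euc n × Euc dd) := ContinuousLinearEquiv.equivOfInverse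
    (D.prod (ContinuousLinearMap.snd ℝ (Euc n) (Euc dd)))
    ((ContinuousLinearMap.fst ℝ (Euc n) (Euc dd) -
      B.comp (ContinuousLinearMap.snd ℝ (Euc n) (Euc dd))).prod (ContinuousLinearMap.snd ℝ (Euc n) (Euc dd)))
    (by
      intro q
      ext1 <;> simp [hDs])
    (by
      intro q
      ext1 <;> simp [hDs])
  have hGd : HasFDerivAt (fun q : Euc n × Euc dd => (F q, q.2)) (G' : (Euc n × Euc dd) →L[ℝ] (Euc n × Euc dd)) (xb, wb) :=
    hFd.prodMk hasFDerivAt_snd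
  have hGc : ContDiffAt ℝ 2 (fun q : Euc n × Euc dd => (F q, q.2)) (xb, wb) := hF.prodMk contDiffAt_snd
  have h2n : (2 : WithTop ℕ∞) ≠ 0 := by norm_num
  have hst := hGc.hasStrictFDerivAt' hGd h2n
  have i1 := hGc.to_localInverse hGd h2n
  have i2 := hst.localInverse_apply_image
  have i3 := hst.eventually_right_inverse
  have i4 := hst.eventually_left_inverse
  have i1 : ContDiffAt ℝ 2 (hst.localInverse (fun q : Euc n × Euc dd => (F q, q.2)) G' (xb, wb)) (F (xb, wb), wb) := i1
  simp only [hF0] at i1 i2 i3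
  set Ξ := hst.localInverse (fun q : Euc n × Euc dd => (F q, q.2)) G' (xb, wb) with hΞ
  refine ⟨fun p => (Ξ p).1, contDiff_fst.contDiffAt.comp _ i1, ?_, ?_, ?_⟩
  · show (Ξ (0, wb)).1 = xb
    rw [i2]
  · filter_upwards [i3] with p hp
    have h1 : F (Ξ p) = p.1 := by
      have := congrArg (fun r : Euc n × Euc dd => r.1) hp
      exact this
    have h2 : (Ξ p).2 = p.2 := by
      have := congrArg (fun r : Euc n × Euc dd => r.2) hp
      exact this
    rw [← h2]
    exact h1
  · filter_upwards [i4] with q hq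
    rw [hq]

theorem g_facts {F : Euc n × Euc dd → Euc n} {f : Euc n × Euc dd → ℝ} {xb vb : Euc n} {wb : Euc dd}
    (hf : ContDiffAt ℝ 2 f (xb, wb)) (hF0 : F (xb, wb) = 0)
    (hF' : HasFDerivAt (fun x => F (x, wb)) (ContinuousLinearMap.id ℝ (Euc n)) xb)
    (hvb : gradient (fun x => f (x, wb)) xb = vb)
    {ξ : Euc n × Euc dd → Euc n} (hξ : ContDiffAt ℝ 2 ξ (0, wb)) (hξ0 : ξ (0, wb) = xb)
    (hξF : ∀ᶠ q in 𝓝 (xb, wb), ξ (F q, q.2) = q.1)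
    {g : Euc n × (Euc dd × Euc n) → ℝ}
    (hgdef : g = fun p => f (ξ (p.1, p.2.1), p.2.1) - ⟪p.2.2, ξ (p.1, p.2.1)⟫) :
    ContDiffAt ℝ 2 g (0, (wb, vb)) ∧ Gam g (0, (wb, vb)) = 0 ∧
    ∀ u, fderiv ℝ (Gam g) (0, (wb, vb)) (u, 0) u =
      ⟪u, fderiv ℝ (gradient (fun x => f (x, wb))) xb u⟫ := by
  -- smoothness of g
  have hξp : ContDiffAt ℝ 2 (fun p : Euc n × (Euc dd × Euc n) => ξ (p.1, p.2.1)) (0, (wb, vb)) := by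
    have : ContDiffAt ℝ 2 (fun p : Euc n × (Euc dd × Euc n) => (p.1, p.2.1)) (0, (wb, vb)) := by fun_prop
    exact ContDiffAt.comp (g := ξ) _ hξ this
  have hfp : ContDiffAt ℝ 2 (fun p : Euc n × (Euc dd × Euc n) => f (ξ (p.1, p.2.1), p.2.1)) (0, (wb, vb)) := by
    have h1 : ContDiffAt ℝ 2 (fun p : Euc n × (Euc dd × Euc n) => (ξ (p.1, p.2.1), p.2.1)) (0, (wb, vb)) :=
      hξp.prodMk (by fun_prop)
    have h2 : ContDiffAt ℝ 2 f ((fun p : Euc n × (Euc dd × Euc n) => (ξ (p.1, p.2.1), p.2.1)) (0, (wb, vb))) := by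
      simpa [hξ0] using hf
    exact ContDiffAt.comp (g := f) _ h2 h1
  have hg : ContDiffAt ℝ 2 g (0, (wb, vb)) := by
    rw [hgdef]
    refine hfp.sub (ContDiffAt.inner ℝ ?_ hξp)
    fun_prop
  -- the partial maps
  set k : Euc n → ℝ := fun x => f (x, wb) - ⟪vb, x⟫ with hk
  set ζ : Euc n → Euc n := fun s => ξ (s, wb) with hζ
  have hfw : ContDiffAt ℝ 2 (fun x => f (x, wb)) xb := by
    have : ContDiffAt ℝ 2 (fun x : Euc n => (x, wb)) xb := by fun_prop
    exact ContDiffAt.comp (g := f) _ hf this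
  have hkc : ContDiffAt ℝ 2 k xb := hfw.sub (contDiffAt_const.inner ℝ contDiffAt_id)
  have hζc : ContDiffAt ℝ 2 ζ 0 := by
    have : ContDiffAt ℝ 2 (fun x : Euc n => (x, wb)) 0 := by fun_prop
    exact ContDiffAt.comp (g := ξ) _ hξ this
  have hζ0 : ζ 0 = xb := hξ0
  have hζd : fderiv ℝ ζ 0 = ContinuousLinearMap.id ℝ (Euc n) := by
    have h1 : HasFDerivAt ζ (fderiv ℝ ζ 0) (F (xb, wb)) := by
      rw [hF0]; exact (hζc.differentiableAt (by norm_num)).hasFDerivAt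
    have h2 : HasFDerivAt (fun x => ζ (F (x, wb))) ((fderiv ℝ ζ 0).comp (ContinuousLinearMap.id ℝ (Euc n))) xb :=
      HasFDerivAt.comp (g := ζ) xb h1 hF'
    have h3 : (fun x => ζ (F (x, wb))) =ᶠ[𝓝 xb] id := by
      have : Tendsto (fun x : Euc n => (x, wb)) (𝓝 xb) (𝓝 (xb, wb)) :=
        (by fun_prop : Continuous fun x : Euc n => (x, wb)).tendsto xb
      filter_upwards [this.eventually hξF] with x hx
      exact hx
    have h4 := (h2.congr_of_eventuallyEq h3.symm).unique (hasFDerivAt_id xb)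
    simpa using h4
  have hkd : ∀ᶠ x in 𝓝 xb, fderiv ℝ k x = fderiv ℝ (fun x => f (x, wb)) x - innerSL ℝ vb := by
    filter_upwards [hfw.eventually (by simp)] with x hx
    have h1 : HasFDerivAt (fun x : Euc n => ⟪vb, x⟫) (innerSL ℝ vb) x := (innerSL ℝ vb).hasFDerivAt
    exact ((hx.differentiableAt (by norm_num)).hasFDerivAt.sub h1).fderiv
  have hkd0 : fderiv ℝ k xb = 0 := by
    rw [hkd.self_of_nhds]
    ext u
    rw [ContinuousLinearMap.sub_apply, ← inner_gradient_eq, hvb]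
    simp
  -- representation of Gam
  have hrep : ∀ᶠ s in 𝓝 (0 : Euc n), Gam g (s, (wb, vb)) = (fderiv ℝ k (ζ s)).comp (fderiv ℝ ζ s) := by
    have t1 : Tendsto (fun s : Euc n => (s, (wb, vb))) (𝓝 0) (𝓝 (0, (wb, vb))) :=
      (by fun_prop : Continuous fun s : Euc n => (s, (wb, vb))).tendsto 0
    have t2 : Tendsto ζ (𝓝 0) (𝓝 xb) := by rw [← hζ0]; exact hζc.continuousAt.tendsto
    filter_upwards [t1.eventually (hg.eventually (by simp)), t2.eventually (hkc.eventually (by simp)),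
      hζc.eventually (by simp)] with s h1 h2 h3
    have a1 : HasFDerivAt (fun s : Euc n => g (s, (wb, vb))) (Gam g (s, (wb, vb))) s :=
      HasFDerivAt.comp (g := g) s (h1.differentiableAt (by norm_num)).hasFDerivAt
        (hasFDerivAt_prodMk_left s (wb, vb))
    have a2 : HasFDerivAt (fun s : Euc n => k (ζ s)) ((fderiv ℝ k (ζ s)).comp (fderiv ℝ ζ s)) s :=
      HasFDerivAt.comp (g := k) s (h2.differentiableAt (by norm_num)).hasFDerivAt
        (h3.differentiableAt (by norm_num)).hasFDerivAt
    have e : (fun s : Euc n => g (s, (wb, vb))) = fun s : Euc n => k (ζ s) := by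
      rw [hgdef]
    rw [e] at a1
    exact a1.unique a2
  refine ⟨hg, ?_, ?_⟩
  · rw [hrep.self_of_nhds, hζ0, hkd0, ContinuousLinearMap.zero_comp]
  · intro u
    have b1 : HasFDerivAt (fun s : Euc n => Gam g (s, (wb, vb)))
        ((fderiv ℝ (Gam g) (0, (wb, vb))).comp (ContinuousLinearMap.inl ℝ (Euc n) (Euc dd × Euc n))) 0 :=
      HasFDerivAt.comp (g := Gam g) 0 ((Gam_contDiffAt hg).differentiableAt (by norm_num)).hasFDerivAt
        (hasFDerivAt_prodMk_left 0 (wb, vb))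
    have c1 : HasFDerivAt (fderiv ℝ k) (fderiv ℝ (fderiv ℝ k) xb) (ζ 0) := by
      rw [hζ0]
      exact ((hkc.fderiv_right (m := 1) (by norm_num)).differentiableAt (by norm_num)).hasFDerivAt
    have c2 : HasFDerivAt ζ (ContinuousLinearMap.id ℝ (Euc n)) 0 := by
      rw [← hζd]; exact (hζc.differentiableAt (by norm_num)).hasFDerivAt
    have c3 : HasFDerivAt (fun s => fderiv ℝ k (ζ s)) ((fderiv ℝ (fderiv ℝ k) xb).comp
        (ContinuousLinearMap.id ℝ (Euc n))) 0 := HasFDerivAt.comp (g := fderiv ℝ k) 0 c1 c2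
    have c4 : HasFDerivAt (fderiv ℝ ζ) (fderiv ℝ (fderiv ℝ ζ) 0) 0 :=
      ((hζc.fderiv_right (m := 1) (by norm_num)).differentiableAt (by norm_num)).hasFDerivAt
    have b2 := c3.clm_comp c4
    have b3 := b1.unique (b2.congr_of_eventuallyEq hrep)
    have b4 := congrArg (fun L : Euc n →L[ℝ] (Euc n →L[ℝ] ℝ) => L u u) b3
    simp only [hζ0, hkd0, hζd] at b4
    have b5 : fderiv ℝ (Gam g) (0, (wb, vb)) (u, 0) u = fderiv ℝ (fderiv ℝ k) xb u u := by
      simpa using b4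
    rw [b5]
    have hH : fderiv ℝ (fderiv ℝ k) xb = fderiv ℝ (fderiv ℝ (fun x => f (x, wb))) xb := by
      have : fderiv ℝ k =ᶠ[𝓝 xb] fun x => fderiv ℝ (fun x => f (x, wb)) x - innerSL ℝ vb := hkd
      rw [this.fderiv_eq, fderiv_sub_const]
    rw [hH, ← inner_hess_eq hfw, real_inner_comm]

end CoordInv


section Suff

theorem localize {E P : Type*} [NormedAddCommGroup E] [ProperSpace E] [TopologicalSpace P]
    {ψ : E × P → ℝ} {C : Set (E × P)} {xb : E} {γ : ℝ} {π : P} {x0 : P → E}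
    (hψ : ∀ x, ‖x - xb‖ ≤ γ → ContinuousAt ψ (x, π))
    (hC : ∀ x, ‖x - xb‖ ≤ γ → (x, π) ∉ C → ∀ᶠ q in 𝓝 (x, π), q ∉ C)
    (hγ : 0 < γ) (hx0 : ContinuousAt x0 π) (hx0b : x0 π = xb)
    (hstr : ∀ x, ‖x - xb‖ ≤ γ → x ≠ xb → (x, π) ∈ C → ψ (xb, π) < ψ (x, π))
    {ε : ℝ} (hε : 0 < ε) :
    ∀ᶠ p in 𝓝 π, ∀ x, ‖x - xb‖ ≤ γ → (x, p) ∈ C → ψ (x, p) ≤ ψ (x0 p, p) → ‖x - xb‖ < ε := by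
  have hK : IsCompact (closedBall xb γ \ ball xb ε) := (isCompact_closedBall xb γ).diff isOpen_ball
  have h0 : ContinuousAt (fun p => ψ (x0 p, p)) π := by
    have h1 : ContinuousAt ψ ((fun p => (x0 p, p)) π) := by
      simp only [hx0b]
      exact hψ xb (by simp [hγ.le])
    exact ContinuousAt.comp (g := ψ) (f := fun p => (x0 p, p)) h1 (hx0.prodMk continuousAt_id)
  have key : ∀ᶠ p in 𝓝 π, ∀ x ∈ closedBall xb γ \ ball xb ε,
      (x, p) ∈ C → ¬ ψ (x, p) ≤ ψ (x0 p, p) := by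
    apply hK.eventually_forall_of_forall_eventually
    rintro x ⟨hx1, hx2⟩
    rw [mem_closedBall_iff_norm] at hx1
    rw [mem_ball_iff_norm, not_lt] at hx2
    have hne : x ≠ xb := by
      rintro rfl
      simp at hx2
      linarith
    have hall : ∀ᶠ q in 𝓝 (x, π), q ∈ C → ¬ ψ q ≤ ψ (x0 q.2, q.2) := by
      by_cases hxC : (x, π) ∈ C
      · have hlt : ψ (x0 π, π) < ψ (x, π) := by rw [hx0b]; exact hstr x hx1 hne hxC
        have h2 : ContinuousAt (fun q : E × P => ψ (x0 q.2, q.2)) (x, π) :=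
          ContinuousAt.comp (g := fun p => ψ (x0 p, p)) (f := fun q : E × P => q.2) h0 continuousAt_snd
        have := Tendsto.eventually_lt h2.tendsto (hψ x hx1).tendsto hlt
        filter_upwards [this] with q hq _
        exact not_le.2 hq
      · filter_upwards [hC x hx1 hxC] with q hq h
        exact absurd h hq
    first
      | exact hall
      | (rw [nhds_prod_eq] at hall; exact hall)
      | (rw [nhds_swap] ; exact hall)
  filter_upwards [key] with p hp x hx hxC hle
  by_contra hcon
  refine hp x ⟨?_, ?_⟩ hxC hle
  · rwa [mem_closedBall_iff_norm]
  · rwa [mem_ball_iff_norm]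

variable {n dd : ℕ} {κ ι : Type*} [Fintype κ] [Nonempty κ] [Fintype ι]

theorem sufficiency {φ : Euc n → Euc dd → EReal} {xb : Euc n} {wb : Euc dd}
    {vb : Euc n} {f : Euc n × Euc dd → ℝ} {F : Euc n × Euc dd → Euc n}
    (hf : ContDiffAt ℝ 2 f (xb, wb)) (hF : ContDiffAt ℝ 2 F (xb, wb))
    (hF0 : F (xb, wb) = 0)
    (hF' : HasFDerivAt (fun x => F (x, wb)) (ContinuousLinearMap.id ℝ (Euc n)) xb)
    (b : κ → Euc n) (d : ι → Euc n) (hpos : ∀ s ∈ Pc d, 0 ≤ rho b s)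
    (hrep : ∀ᶠ q in 𝓝 (xb, wb), φ q.1 q.2 =
      if F q ∈ Pc d then ((f q + rho b (F q) : ℝ) : EReal) else ⊤)
    (hvb : gradient (fun x => f (x, wb)) xb = vb)
    (hH : ∀ u ∈ Submodule.span ℝ {s | s ∈ Pc d ∧ rho b s = 0}, u ≠ 0 →
      0 < ⟪u, fderiv ℝ (gradient (fun x => f (x, wb))) xb u⟫) :
    FullyStableSol φ xb wb vb := by
  obtain ⟨ξ, hξ, hξ0, hFξ, hξF⟩ := coord_inverse hF hF0 hF'
  obtain ⟨g, hgdef⟩ : ∃ g : Euc n × (Euc dd × Euc n) → ℝ,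
    g = fun p => f (ξ (p.1, p.2.1), p.2.1) - ⟪p.2.2, ξ (p.1, p.2.1)⟫ := ⟨_, rfl⟩
  obtain ⟨hg, hG0, hGH⟩ := g_facts hf hF0 hF' hvb hξ hξ0 hξF hgdef
  have hq : ∀ u ∈ Submodule.span ℝ {s | s ∈ Pc d ∧ rho b s = 0}, u ≠ 0 →
      0 < fderiv ℝ (Gam g) (0, (wb, vb)) (u, 0) u := by
    intro u hu hu0
    rw [hGH]
    exact hH u hu hu0
  obtain ⟨δ1, hδ1, hstr⟩ := s_strict_min b d hpos hg hG0
    (fun u hu hr hu0 => hq u (Submodule.subset_span ⟨hu, hr⟩) hu0)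
  obtain ⟨δ2, hδ2, C, hC0, hrho, hest⟩ := s_estimate b d hpos hg hG0 hq
  obtain ⟨Kξ, T, hT, hLξ⟩ := (hξ.of_le (by norm_num : (1 : WithTop ℕ∞) ≤ 2)).exists_lipschitzOnWith
  obtain ⟨Kg, N, hN, hLg⟩ := (hg.of_le (by norm_num : (1 : WithTop ℕ∞) ≤ 2)).exists_lipschitzOnWith
  obtain ⟨δ3, hδ3, hNb⟩ := Metric.mem_nhds_iff.1 hN
  -- good neighborhood
  have hFt : Tendsto (fun q : Euc n × Euc dd => (F q, q.2)) (𝓝 (xb, wb)) (𝓝 (0, wb)) := by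
    have : ContinuousAt (fun q : Euc n × Euc dd => (F q, q.2)) (xb, wb) :=
      hF.continuousAt.prodMk continuousAt_snd
    have h := this.tendsto
    simp only [hF0] at h
    exact h
  have hFn : ∀ᶠ q in 𝓝 (xb, wb), ‖F q‖ < min δ1 (min δ2 δ3) := by
    have h1 : ContinuousAt (fun q => ‖F q‖) (xb, wb) := hF.continuousAt.norm
    apply h1.eventually_lt continuousAt_const
    simp [hF0, hδ1, hδ2, hδ3]
  have hgood := ((hf.eventually (by simp)).and ((hF.eventually (by simp)).and (hrep.and (hξF.and (hFn.and
    ((hFt.eventually hT).and ((hFt.eventually hFξ.eventually_nhds).and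
      (hFt.eventually (hξ.eventually (by simp))))))))))
  obtain ⟨ε, hε, hgood⟩ := Metric.eventually_nhds_iff_ball.1 hgood
  obtain ⟨γ, hγ, hγε⟩ : ∃ γ : ℝ, 0 < γ ∧ γ < ε := ⟨ε / 2, by linarith, by linarith⟩
  have hin : ∀ x w, ‖x - xb‖ ≤ γ → ‖w - wb‖ ≤ γ → (x, w) ∈ ball (xb, wb) ε := by
    intro x w hx hw
    rw [mem_ball_iff_norm, Prod.mk_sub_mk, Prod.norm_mk]
    exact lt_of_le_of_lt (max_le hx hw) hγε
  have Hf := fun x w hx hw => (hgood (x, w) (hin x w hx hw)).1.continuousAt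
  have HF := fun x w hx hw => (hgood (x, w) (hin x w hx hw)).2.1.continuousAt
  have Hrep := fun x w hx hw => (hgood (x, w) (hin x w hx hw)).2.2.1
  have HξF := fun x w hx hw => (hgood (x, w) (hin x w hx hw)).2.2.2.1
  have HFn := fun x w hx hw => (hgood (x, w) (hin x w hx hw)).2.2.2.2.1
  have HT := fun x w hx hw => (hgood (x, w) (hin x w hx hw)).2.2.2.2.2.1
  have HFξ := fun x w hx hw => (hgood (x, w) (hin x w hx hw)).2.2.2.2.2.2.1
  have Hξ := fun x w hx hw => (hgood (x, w) (hin x w hx hw)).2.2.2.2.2.2.2.continuousAt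
  clear hgood hFt hFn
  simp only at Hrep HξF HFn HT HFξ Hξ
  -- objective
  obtain ⟨ψ, hψ⟩ : ∃ ψ : Euc n × (Euc dd × Euc n) → ℝ, ψ = fun q =>
    f (q.1, q.2.1) + rho b (F (q.1, q.2.1)) - ⟪q.2.2, q.1⟫ := ⟨_, rfl⟩
  have hψc : ∀ x w v, ‖x - xb‖ ≤ γ → ‖w - wb‖ ≤ γ → ContinuousAt ψ (x, (w, v)) := by
    intro x w v hx hw
    rw [hψ]
    have hp : ContinuousAt (fun q : Euc n × (Euc dd × Euc n) => (q.1, q.2.1)) (x, (w, v)) := by fun_prop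
    refine ContinuousAt.sub (ContinuousAt.add ?_ ?_) (by fun_prop)
    · exact ContinuousAt.comp (g := f) (f := fun q : Euc n × (Euc dd × Euc n) => (q.1, q.2.1))
        (Hf x w hx hw) hp
    · exact (rho_continuous b).continuousAt.comp
        (ContinuousAt.comp (g := F) (f := fun q : Euc n × (Euc dd × Euc n) => (q.1, q.2.1))
        (HF x w hx hw) hp)
  have hψg : ∀ x w v, ‖x - xb‖ ≤ γ → ‖w - wb‖ ≤ γ →
      ψ (x, (w, v)) = g (F (x, w), (w, v)) + rho b (F (x, w)) := by
    intro x w v hx hw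
    rw [hψ, hgdef]
    simp only
    rw [HξF x w hx hw]
    ring
  have hwb : ‖wb - wb‖ ≤ γ := by simp [hγ.le]
  have hxb : ‖xb - xb‖ ≤ γ := by simp [hγ.le]
  have hψstr : ∀ x, ‖x - xb‖ ≤ γ → x ≠ xb → F (x, wb) ∈ Pc d → ψ (xb, (wb, vb)) < ψ (x, (wb, vb)) := by
    intro x hx hne hP
    rw [hψg x wb vb hx hwb, hψg xb wb vb hxb hwb, hF0, rho_zero, add_zero]
    refine hstr _ hP ?_ (lt_of_lt_of_le (HFn x wb hx hwb) (min_le_left _ _))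
    intro h0
    apply hne
    rw [← HξF x wb hx hwb, h0, hξ0]
  -- localization
  have hx0t : Tendsto (fun p : Euc dd × Euc n => ((0 : Euc n), p.1)) (𝓝 (wb, vb)) (𝓝 (0, wb)) :=
    (by fun_prop : Continuous (fun p : Euc dd × Euc n => ((0 : Euc n), p.1))).tendsto (wb, vb)
  have hx0c : ContinuousAt (fun p : Euc dd × Euc n => ξ (0, p.1)) (wb, vb) :=
    ContinuousAt.comp (g := ξ) (f := fun p : Euc dd × Euc n => ((0 : Euc n), p.1)) hξ.continuousAt hx0t
  have hloc := localize (ψ := ψ) (C := {q | F (q.1, q.2.1) ∈ Pc d}) (xb := xb) (γ := γ)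
    (π := (wb, vb)) (x0 := fun p => ξ (0, p.1)) (fun x hx => hψc x wb vb hx hwb) (by
      intro x hx hq
      have hp : ContinuousAt (fun q : Euc n × (Euc dd × Euc n) => (q.1, q.2.1)) (x, (wb, vb)) := by fun_prop
      have hc : ContinuousAt (fun q : Euc n × (Euc dd × Euc n) => F (q.1, q.2.1)) (x, (wb, vb)) :=
        ContinuousAt.comp (g := F) (f := fun q : Euc n × (Euc dd × Euc n) => (q.1, q.2.1))
          (HF x wb hx hwb) hp
      exact hc.tendsto.eventually ((Pc_isClosed d).isOpen_compl.mem_nhds hq)) hγ hx0c hξ0 hψstr hγ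
  have hx0near : ∀ᶠ p in 𝓝 (wb, vb), ‖ξ (0, p.1) - xb‖ ≤ γ := by
    have h1 : ContinuousAt (fun p : Euc dd × Euc n => ‖ξ (0, p.1) - xb‖) (wb, vb) :=
      (hx0c.sub continuousAt_const).norm
    have := h1.eventually_lt (continuousAt_const (y := γ)) (by simp [hξ0, hγ])
    filter_upwards [this] with p hp using hp.le
  have hall := hloc.and (hx0near.and (hx0t.eventually hFξ))
  obtain ⟨r0, hr0, hall⟩ := Metric.eventually_nhds_iff_ball.1 hall
  obtain ⟨r, hr, hrr0, hrγ, hrδ2, hrδ3⟩ : ∃ r : ℝ, 0 < r ∧ r ≤ r0 ∧ r ≤ γ ∧ r ≤ δ2 ∧ r ≤ δ3 :=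
    ⟨min (min r0 γ) (min δ2 δ3), by simp [hr0, hγ, hδ2, hδ3],
      (min_le_left _ _).trans (min_le_left _ _), (min_le_left _ _).trans (min_le_right _ _),
      (min_le_right _ _).trans (min_le_left _ _), (min_le_right _ _).trans (min_le_right _ _)⟩
  obtain ⟨IsM, hIsM⟩ : ∃ IsM : Euc dd × Euc n → Euc n → Prop, IsM = fun p x =>
    ‖x - xb‖ ≤ γ ∧ F (x, p.1) ∈ Pc d ∧ ∀ y, ‖y - xb‖ ≤ γ → F (y, p.1) ∈ Pc d → ψ (x, p) ≤ ψ (y, p) :=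
    ⟨_, rfl⟩
  have hpn : ∀ p ∈ ball (wb, vb) r, ‖p.1 - wb‖ ≤ γ := by
    intro p hp
    rw [mem_ball_iff_norm] at hp
    exact ((norm_fst_le (p - (wb, vb))).trans hp.le).trans hrγ
  have hex : ∀ p ∈ ball (wb, vb) r, ∃ x, IsM p x := by
    intro p hp
    obtain ⟨-, h2, h3⟩ := hall p (ball_subset_ball hrr0 hp)
    have hw := hpn p hp
    have hcF : ContinuousOn (fun x => F (x, p.1)) (closedBall xb γ) := by
      intro x hx
      rw [mem_closedBall_iff_norm] at hx
      have hp : ContinuousAt (fun x : Euc n => (x, p.1)) x := by fun_prop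
      exact (ContinuousAt.comp (g := F) (f := fun x : Euc n => (x, p.1)) (HF x p.1 hx hw) hp).continuousWithinAt
    have hcψ : ContinuousOn (fun x => ψ (x, p)) (closedBall xb γ) := by
      intro x hx
      rw [mem_closedBall_iff_norm] at hx
      have hp' : ContinuousAt (fun x : Euc n => (x, p)) x := by fun_prop
      exact (ContinuousAt.comp (g := ψ) (f := fun x : Euc n => (x, p))
        (hψc x p.1 p.2 hx hw) hp').continuousWithinAt
    have hcl : IsClosed (closedBall xb γ ∩ (fun x => F (x, p.1)) ⁻¹' (Pc d)) :=
      hcF.preimage_isClosed_of_isClosed isClosed_closedBall (Pc_isClosed d)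
    have hcp : IsCompact (closedBall xb γ ∩ (fun x => F (x, p.1)) ⁻¹' (Pc d)) :=
      (isCompact_closedBall xb γ).of_isClosed_subset hcl inter_subset_left
    have hne : (closedBall xb γ ∩ (fun x => F (x, p.1)) ⁻¹' (Pc d)).Nonempty := by
      refine ⟨ξ (0, p.1), ?_, ?_⟩
      · rw [mem_closedBall_iff_norm]; exact h2
      · show F (ξ (0, p.1), p.1) ∈ Pc d
        rw [h3]
        exact Pc_zero d
    obtain ⟨x, hx, hmin⟩ := hcp.exists_isMinOn hne (hcψ.mono inter_subset_left)
    refine ⟨x, ?_⟩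
    rw [hIsM]
    refine ⟨by rw [← mem_closedBall_iff_norm]; exact hx.1, hx.2, fun y hy hyP => ?_⟩
    exact hmin ⟨by rw [mem_closedBall_iff_norm]; exact hy, hyP⟩
  -- properties of minimizers
  have hprop : ∀ p ∈ ball (wb, vb) r, ∀ x, IsM p x →
      ‖x - xb‖ ≤ γ ∧ F (x, p.1) ∈ Pc d ∧ ‖F (x, p.1)‖ < δ2 ∧ ‖F (x, p.1)‖ < δ3 ∧ ‖p - (wb, vb)‖ < δ2 ∧
      (∀ᶠ s' in 𝓝 (F (x, p.1)), s' ∈ Pc d →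
        g (F (x, p.1), p) + rho b (F (x, p.1)) ≤ g (s', p) + rho b s') := by
    intro p hp x hx
    rw [hIsM] at hx
    obtain ⟨hx1, hx2, hx3⟩ := hx
    have hw := hpn p hp
    obtain ⟨h1, h2, h3⟩ := hall p (ball_subset_ball hrr0 hp)
    have hlt : ‖x - xb‖ < γ := by
      refine h1 x hx1 hx2 (hx3 _ h2 ?_)
      rw [h3]
      exact Pc_zero d
    have hn := HFn x p.1 hx1 hw
    refine ⟨hx1, hx2, lt_of_lt_of_le hn ((min_le_right _ _).trans (min_le_left _ _)),
      lt_of_lt_of_le hn ((min_le_right _ _).trans (min_le_right _ _)), ?_, ?_⟩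
    · rw [mem_ball_iff_norm] at hp
      exact hp.trans_le hrδ2
    · have ht : Tendsto (fun s' : Euc n => (s', p.1)) (𝓝 (F (x, p.1))) (𝓝 (F (x, p.1), p.1)) :=
        (by fun_prop : Continuous (fun s' : Euc n => (s', p.1))).tendsto _
      have hc : ContinuousAt (fun s' => ‖ξ (s', p.1) - xb‖) (F (x, p.1)) :=
        ((ContinuousAt.comp (g := ξ) (f := fun s' : Euc n => (s', p.1)) (Hξ x p.1 hx1 hw) ht).sub
          continuousAt_const).norm
      have hnear := hc.eventually_lt (continuousAt_const (y := γ)) (by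
        rw [HξF x p.1 hx1 hw]; exact hlt)
      filter_upwards [hnear, ht.eventually (HFξ x p.1 hx1 hw)] with s' a1 a2 hs'
      have a2 : F (ξ (s', p.1), p.1) = s' := a2
      have a3 := hx3 (ξ (s', p.1)) a1.le (by rw [a2]; exact hs')
      have e1 := hψg x p.1 p.2 hx1 hw
      have e2 := hψg (ξ (s', p.1)) p.1 p.2 a1.le hw
      rw [a2] at e2
      have e1 : ψ (x, p) = _ := e1
      have e2 : ψ (ξ (s', p.1), p) = _ := e2
      rw [e1, e2] at a3
      exact a3
  have hslip : ∀ p ∈ ball (wb, vb) r, ∀ x, IsM p x → ∀ p' ∈ ball (wb, vb) r, ∀ x', IsM p' x' →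
      ‖F (x, p.1) - F (x', p'.1)‖ ≤ C * ‖p - p'‖ := by
    intro p hp x hx p' hp' x' hx'
    obtain ⟨-, a2, a3, -, a4, a5⟩ := hprop p hp x hx
    obtain ⟨-, b2, b3, -, b4, b5⟩ := hprop p' hp' x' hx'
    exact hest _ p _ p' a3 a4 a2 a5 b3 b4 b2 b5
  have huniq : ∀ p ∈ ball (wb, vb) r, ∀ x, IsM p x → ∀ x', IsM p x' → x = x' := by
    intro p hp x hx x' hx'
    have h := hslip p hp x hx p hp x' hx'
    rw [sub_self, norm_zero, mul_zero] at h
    have h := sub_eq_zero.1 (norm_le_zero_iff.1 h)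
    rw [← HξF x p.1 (hprop p hp x hx).1 (hpn p hp), ← HξF x' p.1 (hprop p hp x' hx').1 (hpn p hp), h]
  have hval : ∀ p ∈ ball (wb, vb) r, ∀ x, IsM p x → ψ (x, p) = g (F (x, p.1), p) := by
    intro p hp x hx
    obtain ⟨a1, a2, a3, -, a4, a5⟩ := hprop p hp x hx
    have e1 : ψ (x, p) = _ := hψg x p.1 p.2 a1 (hpn p hp)
    rw [e1, hrho _ p a3 a4 a2 a5, add_zero]
  choose! σ hσ using hex
  have hWV : ∀ w ∈ ball wb r, ∀ v ∈ ball vb r, (w, v) ∈ ball (wb, vb) r := by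
    intro w hw v hv
    rw [← ball_prod_same]
    exact ⟨hw, hv⟩
  have hWV' : ∀ p ∈ ball wb r ×ˢ ball vb r, p ∈ ball (wb, vb) r := by
    intro p hp
    exact hWV p.1 hp.1 p.2 hp.2
  -- relation with the extended objective
  have hφψ : ∀ p ∈ ball (wb, vb) r, ∀ y, ‖y - xb‖ ≤ γ → F (y, p.1) ∈ Pc d →
      φ y p.1 - ((⟪p.2, y⟫ : ℝ) : EReal) = ((ψ (y, p) : ℝ) : EReal) := by
    intro p hp y hy hyP
    rw [Hrep y p.1 hy (hpn p hp), if_pos hyP, ← EReal.coe_sub, hψ]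
  have hφtop : ∀ p ∈ ball (wb, vb) r, ∀ y, ‖y - xb‖ ≤ γ → F (y, p.1) ∉ Pc d →
      φ y p.1 = ⊤ := by
    intro p hp y hy hyP
    rw [Hrep y p.1 hy (hpn p hp), if_neg hyP]
  have hle : ∀ p ∈ ball (wb, vb) r, ∀ y, ‖y - xb‖ ≤ γ →
      ((ψ (σ p, p) : ℝ) : EReal) ≤ φ y p.1 - ((⟪p.2, y⟫ : ℝ) : EReal) := by
    intro p hp y hy
    by_cases hyP : F (y, p.1) ∈ Pc d
    · rw [hφψ p hp y hy hyP]
      have := hσ p hp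
      rw [hIsM] at this
      exact EReal.coe_le_coe_iff.2 (this.2.2 y hy hyP)
    · rw [hφtop p hp y hy hyP, EReal.top_sub_coe]
      exact le_top
  have hsnd : ∀ p p' : Euc dd × Euc n, ‖p.1 - p'.1‖ ≤ ‖p - p'‖ := fun p p' => norm_fst_le (p - p')
  refine ⟨γ, hγ, ball wb r, ball_mem_nhds _ hr, ball vb r, ball_mem_nhds _ hr,
    ⟨σ, ⟨Kξ * Real.toNNReal (max C 1), ?_⟩, ?_, ?_⟩,
    ⟨fun p => ψ (σ p, p), ⟨Kg * Real.toNNReal (max C 1), ?_⟩, ?_⟩⟩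
  · apply LipschitzOnWith.of_dist_le_mul
    intro p hp p' hp'
    have hp := hWV' p hp
    have hp' := hWV' p' hp'
    have hx := (hprop p hp _ (hσ p hp)).1
    have hx' := (hprop p' hp' _ (hσ p' hp')).1
    have h1 := hLξ.dist_le_mul _ (HT _ _ hx (hpn p hp)) _ (HT _ _ hx' (hpn p' hp'))
    rw [HξF _ _ hx (hpn p hp), HξF _ _ hx' (hpn p' hp')] at h1
    refine h1.trans ?_
    push_cast
    rw [mul_assoc]
    refine mul_le_mul_of_nonneg_left ?_ Kξ.2
    rw [Real.coe_toNNReal _ (by positivity), dist_eq_norm, dist_eq_norm, Prod.mk_sub_mk, Prod.norm_mk]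
    refine max_le ?_ ?_
    · refine (hslip p hp _ (hσ p hp) p' hp' _ (hσ p' hp')).trans ?_
      gcongr
      exact le_max_left _ _
    · refine (hsnd p p').trans ?_
      have : (1 : ℝ) ≤ max C 1 := le_max_right _ _
      nlinarith [norm_nonneg (p - p')]
  · intro w hw v hv
    have hp := hWV w hw v hv
    have hm := hσ (w, v) hp
    have hm' := hm
    rw [hIsM] at hm'
    ext x
    rw [mem_singleton_iff]
    constructor
    · intro hx
      have hx1 : ‖x - xb‖ ≤ γ := hx.1
      have hxP : F (x, w) ∈ Pc d := by
        by_contra hcon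
        exact hx.2.1 (hφtop (w, v) hp x hx1 hcon)
      refine huniq (w, v) hp x ?_ _ hm
      rw [hIsM]
      refine ⟨hx1, hxP, fun y hy hyP => ?_⟩
      have h := hx.2.2 y hy
      have e1 := hφψ (w, v) hp x hx1 hxP
      have e2 := hφψ (w, v) hp y hy hyP
      simp only at e1 e2
      rw [e1, e2] at h
      exact EReal.coe_le_coe_iff.1 h
    · rintro rfl
      refine ⟨hm'.1, ?_, fun y hy => ?_⟩
      · rw [Hrep _ w hm'.1 (hpn (w, v) hp), if_pos hm'.2.1]
        exact EReal.coe_ne_top _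
      · have e1 := hφψ (w, v) hp _ hm'.1 hm'.2.1
        simp only at e1
        rw [e1]
        exact hle (w, v) hp y hy
  · have hp : (wb, vb) ∈ ball (wb, vb) r := mem_ball_self hr
    refine huniq (wb, vb) hp _ (hσ _ hp) _ ?_
    rw [hIsM]
    refine ⟨hxb, by simp only [hF0]; exact Pc_zero d, fun y hy hyP => ?_⟩
    by_cases hne : y = xb
    · rw [hne]
    · exact (hψstr y hy hne hyP).le
  · apply LipschitzOnWith.of_dist_le_mul
    intro p hp p' hp'
    have hp := hWV' p hp
    have hp' := hWV' p' hp'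
    have hmemN : ∀ p ∈ ball (wb, vb) r, (F (σ p, p.1), p) ∈ N := by
      intro p hp
      apply hNb
      rw [mem_ball_iff_norm, Prod.mk_sub_mk, Prod.norm_mk, sub_zero]
      refine max_lt (hprop p hp _ (hσ p hp)).2.2.2.1 ?_
      rw [mem_ball_iff_norm] at hp
      exact hp.trans_le hrδ3
    have h1 := hLg.dist_le_mul _ (hmemN p hp) _ (hmemN p' hp')
    rw [← hval p hp _ (hσ p hp), ← hval p' hp' _ (hσ p' hp')] at h1
    refine h1.trans ?_
    push_cast
    rw [mul_assoc]
    refine mul_le_mul_of_nonneg_left ?_ Kg.2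
    rw [Real.coe_toNNReal _ (by positivity), dist_eq_norm, dist_eq_norm, Prod.mk_sub_mk, Prod.norm_mk]
    have h1 : (1 : ℝ) ≤ max C 1 := le_max_right _ _
    refine max_le ?_ ?_
    · refine (hslip p hp _ (hσ p hp) p' hp' _ (hσ p' hp')).trans ?_
      gcongr
      exact le_max_left _ _
    · nlinarith [norm_nonneg (p - p')]
  · intro w hw v hv
    have hp := hWV w hw v hv
    have hm' := hσ (w, v) hp
    rw [hIsM] at hm'
    refine le_antisymm ?_ ?_
    · refine (iInf₂_le (σ (w, v)) hm'.1).trans ?_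
      exact (hφψ (w, v) hp _ hm'.1 hm'.2.1).le
    · exact le_iInf₂ fun y hy => hle (w, v) hp y hy

end Suff


section Assembly

variable {n dd m : ℕ} {κ ι : Type*} [Fintype κ] [Nonempty κ] [Fintype ι]

theorem assembly {θ : Euc m → EReal} {b : κ → Euc m} {d : ι → Euc m} {c0 : ℝ}
    (Φ : Euc n × Euc dd → Euc m) (φ₀ : Euc n × Euc dd → ℝ) (xb : Euc n) (wb : Euc dd)
    (hΦ : ContDiffAt ℝ 2 Φ (xb, wb)) (hφ₀ : ContDiffAt ℝ 2 φ₀ (xb, wb))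
    (vb : Euc n) (lamb : Euc m)
    (h : LocRep θ (Φ (xb, wb)) lamb b d c0)
    (hlamb : lamb ∈ subdiff θ (Φ (xb, wb)))
    (hincl : ∀ z0, lamb ∈ subdiff θ z0 → ∀ᶠ z in 𝓝 z0, subdiff θ z ⊆ subdiff θ z0)
    (hinj : ∀ y ∈ Spar θ (Φ (xb, wb)),
      ContinuousLinearMap.adjoint (fderiv ℝ (fun x => Φ (x, wb)) xb) y = 0 → y = 0)
    (hvb : vb = gradient (fun x => φ₀ (x, wb)) xb +
        ContinuousLinearMap.adjoint (fderiv ℝ (fun x => Φ (x, wb)) xb) lamb) :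
    FullyStableSol (fun x w => ((φ₀ (x, w) : ℝ) : EReal) + θ (Φ (x, w))) xb wb vb ↔
    ∀ u : Euc n, u ≠ 0 →
      (sosd θ (Φ (xb, wb)) lamb ((fderiv ℝ (fun x => Φ (x, wb)) xb) u)).Nonempty →
      0 < ⟪u, hessXX (fun x w => φ₀ (x, w) + ⟪lamb, Φ (x, w)⟫) xb wb u⟫ := by
  set A := fderiv ℝ (fun x => Φ (x, wb)) xb with hA
  set zb := Φ (xb, wb) with hzb
  obtain ⟨R, hR⟩ := exists_right_inv A (Spar θ zb) hinj
  obtain ⟨F, hFdef⟩ : ∃ F : Euc n × Euc dd → Euc n, F = fun q =>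
    (q.1 - xb) + R (Φ q - zb - A (q.1 - xb)) := ⟨_, rfl⟩
  obtain ⟨f, hfdef⟩ : ∃ f : Euc n × Euc dd → ℝ, f = fun q =>
    φ₀ q + (c0 + ⟪lamb, Φ q - zb⟫) := ⟨_, rfl⟩
  have hpx : ContDiffAt ℝ 2 (fun x : Euc n => (x, wb)) xb := by fun_prop
  have hΦw : ContDiffAt ℝ 2 (fun x => Φ (x, wb)) xb := ContDiffAt.comp (g := Φ) _ hΦ hpx
  have hφw : ContDiffAt ℝ 2 (fun x => φ₀ (x, wb)) xb := ContDiffAt.comp (g := φ₀) _ hφ₀ hpx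
  have hAd : HasFDerivAt (fun x => Φ (x, wb)) A xb := (hΦw.differentiableAt (by norm_num)).hasFDerivAt
  have hF : ContDiffAt ℝ 2 F (xb, wb) := by
    rw [hFdef]
    have h1 : ContDiffAt ℝ 2 (fun q : Euc n × Euc dd => q.1 - xb) (xb, wb) := by fun_prop
    exact h1.add (R.contDiff.contDiffAt.comp _ ((hΦ.sub contDiffAt_const).sub
      (A.contDiff.contDiffAt.comp _ h1)))
  have hF0 : F (xb, wb) = 0 := by
    rw [hFdef]
    simp [hzb]
  have hF' : HasFDerivAt (fun x => F (x, wb)) (ContinuousLinearMap.id ℝ (Euc n)) xb := by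
    rw [hFdef]
    have h1 : HasFDerivAt (fun x : Euc n => x - xb) (ContinuousLinearMap.id ℝ (Euc n)) xb :=
      (hasFDerivAt_id xb).sub_const xb
    have h2 : HasFDerivAt (fun x : Euc n => A (x - xb)) (A.comp (ContinuousLinearMap.id ℝ (Euc n))) xb :=
      A.hasFDerivAt.comp xb h1
    have h3 := (hAd.sub_const zb).sub h2
    have h4 := h1.add (R.hasFDerivAt.comp xb h3)
    refine h4.congr_fderiv ?_
    simp
  have hf : ContDiffAt ℝ 2 f (xb, wb) := by
    rw [hfdef]
    exact hφ₀.add (contDiffAt_const.add (contDiffAt_const.inner ℝ (hΦ.sub contDiffAt_const)))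
  have hinner : ∀ c ∈ Spar θ zb, ∀ q, ⟪c, A (F q)⟫ = ⟪c, Φ q - zb⟫ := by
    intro c hc q
    rw [hFdef]
    simp only [map_add, inner_add_right, hR c hc, inner_sub_right]
    ring
  have hPiff : ∀ q, F q ∈ Pc (fun j => ContinuousLinearMap.adjoint A (d j)) ↔ Φ q - zb ∈ Pc d := by
    intro q
    rw [Pc_adj]
    simp only [Pc, mem_setOf_eq]
    exact forall_congr' fun j => by rw [hinner _ (h.d_mem hlamb j)]
  have hreq : ∀ q, rho (fun j => ContinuousLinearMap.adjoint A (b j)) (F q) = rho b (Φ q - zb) := by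
    intro q
    rw [rho_adj]
    simp only [rho]
    exact iSup_congr fun j => hinner _ (h.b_mem hlamb j) q
  have hpos := h.pos hlamb
  have hpos' : ∀ s ∈ Pc (fun j => ContinuousLinearMap.adjoint A (d j)),
      0 ≤ rho (fun j => ContinuousLinearMap.adjoint A (b j)) s := by
    intro s hs
    rw [rho_adj]
    exact hpos _ ((Pc_adj A d s).1 hs)
  have hrep : ∀ᶠ q in 𝓝 (xb, wb), (((φ₀ (q.1, q.2) : ℝ) : EReal) + θ (Φ (q.1, q.2))) =
      if F q ∈ Pc (fun j => ContinuousLinearMap.adjoint A (d j)) then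
        ((f q + rho (fun j => ContinuousLinearMap.adjoint A (b j)) (F q) : ℝ) : EReal) else ⊤ := by
    have hl := hΦ.continuousAt.tendsto.eventually h.loc
    filter_upwards [hl] with q hq
    rw [Prod.mk.eta, hq, hreq]
    by_cases hP : Φ q - zb ∈ Pc d
    · rw [if_pos hP, if_pos ((hPiff q).2 hP), ← EReal.coe_add, hfdef]
      congr 1
      ring
    · rw [if_neg hP, if_neg (fun hh => hP ((hPiff q).1 hh)), EReal.coe_add_top]
  have hgrad : ∀ x, gradient (fun x => f (x, wb)) x =
      gradient (fun x => φ₀ (x, wb) + ⟪lamb, Φ (x, wb)⟫) x := by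
    intro x
    have : (fun x => f (x, wb)) = fun x => (φ₀ (x, wb) + ⟪lamb, Φ (x, wb)⟫) + (c0 - ⟪lamb, zb⟫) := by
      ext x
      rw [hfdef]
      simp only [inner_sub_right]
      ring
    rw [this]
    unfold gradient
    rw [fderiv_add_const]
  have hhess : hessXX (fun x w => φ₀ (x, w) + ⟪lamb, Φ (x, w)⟫) xb wb =
      fderiv ℝ (gradient (fun x => f (x, wb))) xb := by
    have : gradient (fun x => f (x, wb)) = fun x => gradient (fun x => φ₀ (x, wb) + ⟪lamb, Φ (x, wb)⟫) x :=
      funext hgrad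
    rw [this]
    rfl
  have hvb' : gradient (fun x => f (x, wb)) xb = vb := by
    rw [hgrad, hvb]
    refine ext_inner_right ℝ fun u => ?_
    rw [inner_gradient_eq, inner_add_left, inner_gradient_eq, ContinuousLinearMap.adjoint_inner_left]
    have h1 : HasFDerivAt (fun x => ⟪lamb, Φ (x, wb)⟫) ((innerSL ℝ lamb).comp A) xb :=
      (innerSL ℝ lamb).hasFDerivAt.comp xb hAd
    have h2 := ((hφw.differentiableAt (by norm_num)).hasFDerivAt.add h1).fderiv
    have h3 := congrArg (fun L : Euc n →L[ℝ] ℝ => L u) h2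
    exact h3
  rw [hhess]
  constructor
  · intro hfs u hu hne
    obtain ⟨s1, s2, ⟨p1, r1⟩, ⟨p2, r2⟩, rfl⟩ := span_zero_set _ _ hpos' (dom_sosd h hlamb A hinj hne)
    have hfw : ContDiffAt ℝ 2 (fun x => f (x, wb)) xb := ContDiffAt.comp (g := f) _ hf hpx
    have hFw : ContDiffAt ℝ 2 (fun x => F (x, wb)) xb := ContDiffAt.comp (g := F) _ hF hpx
    have ht : Tendsto (fun x : Euc n => (x, wb)) (𝓝 xb) (𝓝 (xb, wb)) := hpx.continuousAt.tendsto
    exact necessity hfs hfw hFw hF0 hF' _ _ hpos' (ht.eventually hrep) hvb' s1 s2 p1 r1 p2 r2 hu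
  · intro hss
    refine sufficiency hf hF hF0 hF' _ _ hpos' hrep hvb' ?_
    intro u hu hu0
    refine hss u hu0 ?_
    obtain ⟨s1, s2, ⟨p1, r1⟩, ⟨p2, r2⟩, rfl⟩ := span_zero_set _ _ hpos' hu
    rw [Pc_adj] at p1 p2
    rw [rho_adj] at r1 r2
    rw [map_sub]
    exact ⟨0, sosd_mem h hlamb hincl p1 r1 p2 r2⟩

end Assembly


/-- Second-order characterization of full stability in composite
optimization: under nondegeneracy, `xb` is a fully stable locally optimal solution of
`P(wb,vb)` iff the composite SSOSC holds:
`⟨u, ∇²ₓₓL(xb,wb,lamb) u⟩ > 0` for all `u ≠ 0` with `∇ₓΦ(xb,wb)u ∈ dom ∂²θ(zb,lamb)`. -/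
theorem fullyStable_iff_composite_ssosc {n dd m l p : ℕ} (hl : 0 < l)
    (a : Fin l → Euc m) (α : Fin l → ℝ) (d : Fin p → Euc m) (β : Fin p → ℝ)
    (hdom : (cpwlDom d β).Nonempty)
    (Φ : Euc n × Euc dd → Euc m) (φ₀ : Euc n × Euc dd → ℝ) (xb : Euc n) (wb : Euc dd)
    (hΦ : ContDiffAt ℝ 2 Φ (xb, wb)) (hφ₀ : ContDiffAt ℝ 2 φ₀ (xb, wb))
    (hzb : Φ (xb, wb) ∈ cpwlDom d β)
    (hnd : (Spar (cpwlFun a α d β) (Φ (xb, wb)) : Set (Euc m)) ∩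
        {y | ContinuousLinearMap.adjoint (fderiv ℝ (fun x => Φ (x, wb)) xb) y = 0} = {0})
    (vb : Euc n) (lamb : Euc m)
    (hlamb : lamb ∈ subdiff (cpwlFun a α d β) (Φ (xb, wb)))
    (hvb : vb = gradient (fun x => φ₀ (x, wb)) xb +
        ContinuousLinearMap.adjoint (fderiv ℝ (fun x => Φ (x, wb)) xb) lamb) :
    FullyStableSol (fun x w => ((φ₀ (x, w) : ℝ) : EReal) + cpwlFun a α d β (Φ (x, w)))
        xb wb vb ↔
    ∀ u : Euc n, u ≠ 0 →
      (sosd (cpwlFun a α d β) (Φ (xb, wb)) lamb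
          ((fderiv ℝ (fun x => Φ (x, wb)) xb) u)).Nonempty →
      0 < ⟪u, hessXX (fun x w => φ₀ (x, w) + ⟪lamb, Φ (x, w)⟫) xb wb u⟫ := by
  obtain ⟨hK, c0, hrep⟩ := cpwl_locRep hl a α d β (Φ (xb, wb)) lamb hzb
  haveI : Fintype (Kact a α d β (Φ (xb, wb))) := Fintype.ofFinite _
  haveI : Fintype (Iact d β (Φ (xb, wb))) := Fintype.ofFinite _
  refine assembly Φ φ₀ xb wb hΦ hφ₀ vb lamb hrep hlamb ?_ ?_ hvb
  · intro z0 hz0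
    have hz0d : z0 ∈ cpwlDom d β := by
      by_contra hcon
      have h1 := hz0 (Φ (xb, wb))
      have h2 : cpwlFun a α d β z0 = ⊤ := if_neg hcon
      rw [h2, EReal.top_add_coe, hrep.val] at h1
      exact EReal.coe_ne_top _ (top_le_iff.1 h1)
    obtain ⟨hK0, c1, hrep0⟩ := cpwl_locRep hl a α d β z0 lamb hz0d
    exact hrep0.sub_incl
  · intro y hy hy0
    have : y ∈ ({0} : Set (Euc m)) := by
      rw [← hnd]
      exact ⟨hy, hy0⟩
    exact this
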